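/- Let A be a ring-indecomposable finite-dimensional algebra over a field k (its only central idempotents are 0 and 1). If every finitely generated module over the trivial extension algebra T(A) has complexity at most one, then A has finite global dimension. -/

import Mathlib

open TensorProduct

/-- The dimension over `k` of a module over the `k`-algebra `B`. -/
noncomputable def kDim (k B : Type) [Field k] [Ring B] [Algebra k B]
    (M : Type) [AddCommGroup M] [Module B M] : ℕ :=
  letI : Module k M := Module.compHom M (algebraMap k B)
  Module.finrank k M

/-- A `B`-module `M` has complexity at most one: there are a constant `C` and a projective
resolution `⋯ → P_1 → P_0 → M → 0` by finitely generated projective `B`-modules with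
`dim_k P_t ≤ C` for all `t`. -/
noncomputable def ComplexityLeOne (k B : Type) [Field k] [Ring B] [Algebra k B]
    (M : Type) [AddCommGroup M] [Module B M] : Prop :=
  ∃ (C : ℕ) (P : ℕ → ModuleCat B) (f : ∀ i, P (i + 1) →ₗ[B] P i) (π : (P 0 : Type) →ₗ[B] M),
    (∀ i, Module.Projective B (P i)) ∧ (∀ i, Module.Finite B (P i)) ∧
    (∀ i, kDim k B (P i) ≤ C) ∧
    Function.Surjective π ∧ LinearMap.range (f 0) = LinearMap.ker π ∧
    ∀ i, LinearMap.range (f (i + 1)) = LinearMap.ker (f i)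

/-- The `R`-module `M` has projective dimension at most `d`: there is a projective
resolution `⋯ → P_1 → P_0 → M → 0` which vanishes in degrees `> d`. -/
def ProjDimLE (R : Type) [Ring R] (M : Type) [AddCommGroup M] [Module R M] (d : ℕ) : Prop :=
  ∃ (P : ℕ → ModuleCat R) (f : ∀ i, P (i + 1) →ₗ[R] P i) (π : (P 0 : Type) →ₗ[R] M),
    (∀ i, Module.Projective R (P i)) ∧ Function.Surjective π ∧
    LinearMap.range (f 0) = LinearMap.ker π ∧
    (∀ i, LinearMap.range (f (i + 1)) = LinearMap.ker (f i)) ∧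
    ∀ i, d < i → Subsingleton (P i)

/-- The ring `R` has finite global dimension: there is a `d` such that every `R`-module has
projective dimension at most `d`. -/
def HasFiniteGlobalDimension (R : Type) [Ring R] : Prop :=
  ∃ d : ℕ, ∀ (M : Type) [AddCommGroup M] [Module R M], ProjDimLE R M d

section DualBimodule

variable (k A : Type) [Field k] [Ring A] [Algebra k A]

/-- The left `A`-action on `D(A) = Hom_k(A, k)`, given by `(a • f) x = f (x * a)`. -/
noncomputable instance Module.Dual.leftModule : Module A (Module.Dual k A) where
  smul a f := f ∘ₗ LinearMap.mulRight k a
  one_smul f := LinearMap.ext fun x => by show f (x * 1) = f x; rw [mul_one]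
  mul_smul a b f := LinearMap.ext fun x => by
    show f (x * (a * b)) = f (x * a * b); rw [mul_assoc]
  smul_zero a := LinearMap.ext fun x => by show (0 : Module.Dual k A) (x * a) = 0; rfl
  smul_add a f g := LinearMap.ext fun x => by
    show (f + g) (x * a) = f (x * a) + g (x * a); rfl
  add_smul a b f := LinearMap.ext fun x => by
    show f (x * (a + b)) = f (x * a) + f (x * b); rw [mul_add, map_add]
  zero_smul f := LinearMap.ext fun x => by show f (x * 0) = 0; rw [mul_zero, map_zero]

/-- The right `A`-action on `D(A) = Hom_k(A, k)`, given by `(f • op b) x = f (b * x)`. -/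
noncomputable instance Module.Dual.rightModule : Module Aᵐᵒᵖ (Module.Dual k A) where
  smul b f := f ∘ₗ LinearMap.mulLeft k b.unop
  one_smul f := LinearMap.ext fun x => by show f (1 * x) = f x; rw [one_mul]
  mul_smul a b f := LinearMap.ext fun x => by
    show f ((a * b).unop * x) = f (b.unop * (a.unop * x))
    rw [MulOpposite.unop_mul, mul_assoc]
  smul_zero a := LinearMap.ext fun x => by show (0 : Module.Dual k A) (a.unop * x) = 0; rfl
  smul_add a f g := LinearMap.ext fun x => by
    show (f + g) (a.unop * x) = f (a.unop * x) + g (a.unop * x); rfl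
  add_smul a b f := LinearMap.ext fun x => by
    show f ((a + b).unop * x) = f (a.unop * x) + f (b.unop * x)
    rw [MulOpposite.unop_add, add_mul, map_add]
  zero_smul f := LinearMap.ext fun x => by
    show f ((0 : Aᵐᵒᵖ).unop * x) = 0
    rw [MulOpposite.unop_zero, zero_mul, map_zero]

instance : SMulCommClass A Aᵐᵒᵖ (Module.Dual k A) where
  smul_comm a b f := LinearMap.ext fun x => by
    show f (b.unop * (x * a)) = f (b.unop * x * a); rw [mul_assoc]

instance : IsScalarTower k A (Module.Dual k A) where
  smul_assoc c a f := LinearMap.ext fun x => by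
    show f (x * (c • a)) = c • f (x * a)
    rw [mul_smul_comm, map_smul]

instance : IsScalarTower k Aᵐᵒᵖ (Module.Dual k A) where
  smul_assoc c b f := LinearMap.ext fun x => by
    show f ((c • b).unop * x) = c • f (b.unop * x)
    rw [MulOpposite.unop_smul, smul_mul_assoc, map_smul]

/-- The trivial extension algebra `T(A) = A ⊕ D(A)`. -/
noncomputable abbrev TrivialExtension : Type := TrivSqZeroExt A (Module.Dual k A)

end DualBimodule

/-!
Suppose some finite-dimensional `A`-module has infinite projective dimension, and let `X` be one of
least dimension; every endomorphism of `X` is then zero or injective. Regard `X` as a module over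
`T(A)`, graded with `A` in degree `0` and `D(A)` in degree `1`, and take its minimal graded
projective resolution `P` with syzygies `Ω^t`. Complexity at most one bounds their dimensions.

Since `T(A)` is self-injective, every endomorphism of `Ω^t` is nilpotent or injective, so the
degrees in which `Ω^t` lives have no gaps. The degree-zero strand of `P` is a projective resolution
of `X` over `A`, so `Ω^t` is never zero in degree `0`, and all the `Ω^t` live in a bounded range of
degrees. Let `n` be the largest degree that occurs. If `n = 0`, then `D(A)` kills `P_0`, which is
impossible. If `n > 0`, the strand of degree `n` consists of short exact sequences
`0 → (Ω^{t+1})_n → (P_t)_n → (Ω^t)_n → 0` of `A`-modules with injective middle terms and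
`(Ω^0)_n = 0`. The `(Ω^t)_n` therefore have finite injective dimension. Modules of bounded dimension
and finite injective dimension have uniformly bounded injective dimension, because vanishing of
`Ext` is an open condition on the structure constants and polynomial rings are Noetherian. This
forces each `(Ω^t)_n` to be injective. The sequences then split, and a splitting contradicts the
minimality of `P`.
-/

section Ext

open CategoryTheory Abelian

universe u

variable {R : Type u} [Ring R]

theorem exists_extend_of_subsingleton_ext_one {S : ShortComplex (ModuleCat.{u} R)}
    (hS : S.ShortExact) {K : ModuleCat.{u} R} [Subsingleton (Ext S.X₃ K 1)] (g : S.X₁ ⟶ K) :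
    ∃ h : S.X₂ ⟶ K, S.f ≫ h = g := by
  obtain ⟨h, hh⟩ := Ext.contravariant_sequence_exact₁ hS K (Ext.mk₀ g) (add_zero 1)
    (Subsingleton.elim _ _)
  obtain ⟨h, rfl⟩ := Ext.homEquiv₀.symm.surjective h
  exact ⟨h, Ext.homEquiv₀.symm.injective (by simpa using hh)⟩

theorem subsingleton_ext_one_iff {S : ShortComplex (ModuleCat.{u} R)} (hS : S.ShortExact)
    [Projective S.X₂] (K : ModuleCat.{u} R) :
    Subsingleton (Ext S.X₃ K 1) ↔ ∀ g : S.X₁ ⟶ K, ∃ h : S.X₂ ⟶ K, S.f ≫ h = g := by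
  refine ⟨fun _ g ↦ exists_extend_of_subsingleton_ext_one hS g,
    fun extend ↦ subsingleton_of_forall_eq 0 fun x ↦ ?_⟩
  obtain ⟨g, rfl⟩ := precomp_extClass_surjective_of_projective_X₂ K hS 0 x
  obtain ⟨g, rfl⟩ := Ext.homEquiv₀.symm.surjective g
  obtain ⟨h, rfl⟩ := extend g
  simp [Ext.homEquiv₀, ← Ext.mk₀_comp_mk₀]

theorem subsingleton_ext_add_two_iff {S : ShortComplex (ModuleCat.{u} R)} (hS : S.ShortExact)
    [Projective S.X₂] (K : ModuleCat.{u} R) (n : ℕ) :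
    Subsingleton (Ext S.X₃ K (n + 2)) ↔ Subsingleton (Ext S.X₁ K (n + 1)) := by
  refine ⟨fun _ ↦ subsingleton_of_forall_eq 0 fun x ↦ ?_,
    fun _ ↦ (precomp_extClass_surjective_of_projective_X₂ K hS (n + 1)).subsingleton⟩
  obtain ⟨y, rfl⟩ := Ext.contravariant_sequence_exact₁ hS K x (add_comm 1 (n + 1))
    (Subsingleton.elim _ _)
  rw [y.eq_zero_of_projective, Ext.comp_zero]

theorem subsingleton_ext_of_isFiniteLength {K : ModuleCat.{u} R} {n : ℕ}
    (simple : ∀ (S : Type u) [AddCommGroup S] [Module R S], IsSimpleModule R S →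
      Subsingleton (Ext (ModuleCat.of R S) K n))
    {M : Type u} [AddCommGroup M] [Module R M] (hM : IsFiniteLength R M) :
    Subsingleton (Ext (ModuleCat.of R M) K n) := by
  induction hM with
  | @of_subsingleton M _ _ _ =>
    refine subsingleton_of_forall_eq 0 fun x ↦ ?_
    rw [← Ext.mk₀_id_comp x, (ModuleCat.isZero_of_subsingleton (ModuleCat.of R M)).eq_of_src
      (𝟙 _) 0, Ext.mk₀_zero, Ext.zero_comp]
  | @of_simple_quotient M _ _ N simpleQuotient _ ext_N =>
    let S := ModuleCat.shortComplexOfCompEqZero N.subtype N.mkQ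
      (by ext x; simp)
    have hS : S.ShortExact := ModuleCat.shortComplex_shortExact S
      (LinearMap.exact_subtype_mkQ N) N.injective_subtype N.mkQ_surjective
    have := simple (M ⧸ N) simpleQuotient
    refine subsingleton_of_forall_eq 0 fun x ↦ ?_
    obtain ⟨y, rfl⟩ := Ext.contravariant_sequence_exact₂ hS K x (ext_N.elim _ _)
    rw [Subsingleton.elim y 0, Ext.comp_zero]

theorem isSemisimpleModule_of_isTorsionBySet_jacobson [IsSemiprimaryRing R] {M : Type*}
    [AddCommGroup M] [Module R M] (h : Module.IsTorsionBySet R M (Ring.jacobson R)) :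
    IsSemisimpleModule R M := by
  have := IsSemiprimaryRing.isSemisimpleRing (R := R)
  let := h.module
  exact h.isSemisimpleModule_iff.mp inferInstance

theorem isSemisimpleModule_quotient_jacobson [IsSemiprimaryRing R] :
    IsSemisimpleModule R (R ⧸ Ring.jacobson R) :=
  isSemisimpleModule_of_isTorsionBySet_jacobson <|
    (Module.isTorsionBySet_quotient_iff _ _).mpr fun r _ ha ↦ Ideal.mul_mem_right r _ ha

theorem exists_rightInverse_factor_of_isSimpleModule [IsSemiprimaryRing R] (S : Type u)
    [AddCommGroup S] [Module R S] [IsSimpleModule R S] :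
    ∃ (p : R ⧸ Ring.jacobson R →ₗ[R] S) (s : S →ₗ[R] R ⧸ Ring.jacobson R), p ∘ₗ s = .id := by
  obtain ⟨I, hI, ⟨e⟩⟩ := isSimpleModule_iff_quot_maximal.mp ‹IsSimpleModule R S›
  have := isSemisimpleModule_quotient_jacobson (R := R)
  have hJI : Ring.jacobson R ≤ I := sInf_le hI.out
  obtain ⟨s, hs⟩ := IsSemisimpleModule.lifting_property (Submodule.factor hJI)
    (Submodule.factor_surjective hJI) e.toLinearMap
  exact ⟨e.symm.toLinearMap ∘ₗ Submodule.factor hJI, s, by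
    rw [LinearMap.comp_assoc, hs]; exact LinearMap.ext e.symm_apply_apply⟩

theorem subsingleton_ext_of_isSimpleModule [IsSemiprimaryRing R] {K : ModuleCat.{u} R} {n : ℕ}
    [Subsingleton (Ext (ModuleCat.of R (R ⧸ Ring.jacobson R)) K n)]
    (S : Type u) [AddCommGroup S] [Module R S] [IsSimpleModule R S] :
    Subsingleton (Ext (ModuleCat.of R S) K n) := by
  obtain ⟨p, s, hps⟩ := exists_rightInverse_factor_of_isSimpleModule (R := R) S
  refine subsingleton_of_forall_eq 0 fun x ↦ ?_
  calc x = (Ext.mk₀ (ModuleCat.ofHom s)).comp ((Ext.mk₀ (ModuleCat.ofHom p)).comp x (zero_add n))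
        (zero_add n) := by
        rw [Ext.mk₀_comp_mk₀_assoc, ← ModuleCat.ofHom_comp, hps]; exact (Ext.mk₀_id_comp x).symm
    _ = 0 := by rw [Subsingleton.elim (Ext.comp _ x _) 0, Ext.comp_zero]

theorem injective_of_subsingleton_ext_one_quotient {K : ModuleCat.{u} R}
    (h : ∀ I : Ideal R, Subsingleton (Ext (ModuleCat.of R (R ⧸ I)) K 1)) : Injective K := by
  refine Module.injective_object_of_injective_module R K (inj := Module.Baer.injective ?_)
  intro I g
  let S := ModuleCat.shortComplexOfCompEqZero I.subtype I.mkQ (by ext x; simp)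
  have hS : S.ShortExact := ModuleCat.shortComplex_shortExact S
    (LinearMap.exact_subtype_mkQ I) I.injective_subtype I.mkQ_surjective
  have : Subsingleton (Ext S.X₃ K 1) := h I
  obtain ⟨f, hf⟩ := exists_extend_of_subsingleton_ext_one hS (ModuleCat.ofHom g)
  exact ⟨f.hom, fun x hx ↦ LinearMap.congr_fun congr(($hf).hom) ⟨x, hx⟩⟩

theorem hasInjectiveDimensionLT_of_subsingleton_ext_jacobson [IsArtinianRing R]
    {K : ModuleCat.{u} R} {n : ℕ}
    (h : Subsingleton (Ext (ModuleCat.of R (R ⧸ Ring.jacobson R)) K (n + 1))) :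
    HasInjectiveDimensionLT K (n + 1) := by
  induction n generalizing K with
  | zero =>
    have := injective_of_subsingleton_ext_one_quotient fun I ↦
      subsingleton_ext_of_isFiniteLength (K := K) (n := 1)
        (fun S _ _ _ ↦ subsingleton_ext_of_isSimpleModule S)
        (isFiniteLength_iff_isNoetherian_isArtinian.mpr ⟨inferInstance, inferInstance⟩ :
          IsFiniteLength R (R ⧸ I))
    infer_instance
  | succ n ih =>
    let ⟨p⟩ := EnoughInjectives.presentation K
    have hS : (ShortComplex.mk _ _ (Limits.cokernel.condition p.f)).ShortExact :=
      { exact := ShortComplex.exact_cokernel p.f }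
    refine (hS.hasInjectiveDimensionLT_X₃_iff n p.injective).mp (ih ?_)
    refine subsingleton_of_forall_eq 0 fun x ↦ ?_
    obtain ⟨y, rfl⟩ := Ext.covariant_sequence_exact₃ _ hS x rfl (h.elim _ _)
    rw [y.eq_zero_of_injective, Ext.zero_comp]

theorem hasProjectiveDimensionLT_of_jacobson [IsArtinianRing R] {n : ℕ}
    [HasProjectiveDimensionLT (ModuleCat.of R (R ⧸ Ring.jacobson R)) (n + 1)]
    (M : ModuleCat.{u} R) : HasProjectiveDimensionLT M (n + 1) := by
  refine HasProjectiveDimensionLT.mk fun i hi K x ↦ ?_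
  have : HasInjectiveDimensionLT K (n + 1) :=
    hasInjectiveDimensionLT_of_subsingleton_ext_jacobson
      (HasProjectiveDimensionLT.subsingleton _ (n + 1) (n + 1) le_rfl K)
  exact x.eq_zero_of_hasInjectiveDimensionLT (n + 1) hi

end Ext

section Factorization

universe u v

variable {R : Type u} [Ring R] {M N P : Type*} [AddCommGroup M] [Module R M]
  [AddCommGroup N] [Module R N] [AddCommGroup P] [Module R P]

theorem exists_comp_eq_of_ker_le_ker [Small.{v} R] {Q : Type v} [AddCommGroup Q] [Module R Q]
    [Module.Injective R Q] (f : M →ₗ[R] N) (g : M →ₗ[R] Q)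
    (h : LinearMap.ker f ≤ LinearMap.ker g) : ∃ φ : N →ₗ[R] Q, φ ∘ₗ f = g := by
  obtain ⟨φ, hφ⟩ := Module.Injective.extension_property R Q _ _ ((LinearMap.ker f).liftQ f le_rfl)
    (LinearMap.ker_eq_bot.mp (Submodule.ker_liftQ_eq_bot _ _ _ le_rfl))
    ((LinearMap.ker f).liftQ g h)
  exact ⟨φ, by
    rw [← (LinearMap.ker f).liftQ_mkQ f le_rfl, ← LinearMap.comp_assoc, hφ, Submodule.liftQ_mkQ]⟩

theorem exists_comp_eq_of_ker_le_ker_of_surjective (f : M →ₗ[R] N) (hf : Function.Surjective f)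
    (g : M →ₗ[R] P) (h : LinearMap.ker f ≤ LinearMap.ker g) : ∃ φ : N →ₗ[R] P, φ ∘ₗ f = g := by
  refine ⟨(LinearMap.ker f).liftQ g h ∘ₗ (f.quotKerEquivOfSurjective hf).symm.toLinearMap, ?_⟩
  ext x
  have : (f.quotKerEquivOfSurjective hf).symm (f x) = (LinearMap.ker f).mkQ x := by
    rw [LinearEquiv.symm_apply_eq]
    rfl
  simp [this]

end Factorization

section UniformBound

open CategoryTheory Abelian

universe u

theorem exists_subsingleton_ext_iff_ext_one {R : Type u} [Ring R] [IsNoetherianRing R]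
    (Z : ModuleCat.{u} R) [Module.Finite R Z] (l : ℕ) :
    ∃ Y : ModuleCat.{u} R, Module.Finite R Y ∧ ∀ K : ModuleCat.{u} R,
      Subsingleton (Ext Z K (l + 1)) ↔ Subsingleton (Ext Y K 1) := by
  induction l generalizing Z with
  | zero => exact ⟨Z, inferInstance, fun _ ↦ Iff.rfl⟩
  | succ l ih =>
    obtain ⟨n, f, hf⟩ := Module.Finite.exists_fin' R Z
    have hS := LinearMap.shortExact_shortComplexKer hf
    have : Projective f.shortComplexKer.X₂ :=
      (IsProjective.iff_projective (Fin n → R)).mp inferInstance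
    obtain ⟨Y, hY, h⟩ := ih (ModuleCat.of R (LinearMap.ker f))
    exact ⟨Y, hY, fun K ↦ (subsingleton_ext_add_two_iff hS K l).trans (h K)⟩

theorem exists_subsingleton_ext_one_iff {R : Type u} [Ring R] [IsNoetherianRing R]
    (Z : ModuleCat.{u} R) [Module.Finite R Z] :
    ∃ (n₀ n₁ n₂ : ℕ) (d : (Fin n₁ → R) →ₗ[R] (Fin n₀ → R)) (d' : (Fin n₂ → R) →ₗ[R] (Fin n₁ → R)),
      d ∘ₗ d' = 0 ∧ ∀ K : ModuleCat.{u} R, Subsingleton (Ext Z K 1) ↔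
        ∀ g : (Fin n₁ → R) →ₗ[R] K, g ∘ₗ d' = 0 → ∃ h : (Fin n₀ → R) →ₗ[R] K, h ∘ₗ d = g := by
  obtain ⟨n₀, f, hf⟩ := Module.Finite.exists_fin' R Z
  obtain ⟨n₁, p, hp⟩ := Module.Finite.exists_fin' R (LinearMap.ker f)
  obtain ⟨n₂, d', hd'⟩ := (LinearMap.ker p).fg_iff_exists_fin_linearMap.mp
    (IsNoetherian.noetherian _)
  have hpd' : p ∘ₗ d' = 0 := LinearMap.range_le_ker_iff.mp hd'.le
  refine ⟨n₀, n₁, n₂, (LinearMap.ker f).subtype ∘ₗ p, d', by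
    rw [LinearMap.comp_assoc, hpd', LinearMap.comp_zero], fun K ↦ ?_⟩
  have hS := LinearMap.shortExact_shortComplexKer hf
  have : Projective f.shortComplexKer.X₂ :=
    (IsProjective.iff_projective (Fin n₀ → R)).mp inferInstance
  refine (subsingleton_ext_one_iff hS K).trans ⟨fun extend g hg ↦ ?_, fun exact_at g ↦ ?_⟩
  · obtain ⟨g', rfl⟩ := exists_comp_eq_of_ker_le_ker_of_surjective p hp g
      (hd' ▸ LinearMap.range_le_ker_iff.mpr hg)
    obtain ⟨h, hh⟩ := extend (ModuleCat.ofHom g')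
    exact ⟨h.hom, LinearMap.ext fun x ↦ LinearMap.congr_fun congr(($hh).hom) (p x)⟩
  · obtain ⟨h, hh⟩ := exact_at (g.hom ∘ₗ p)
      (by rw [LinearMap.comp_assoc, hpd', LinearMap.comp_zero])
    refine ⟨ModuleCat.ofHom h, ?_⟩
    ext x
    obtain ⟨y, rfl⟩ := hp x
    exact LinearMap.congr_fun hh y

section Determinant

variable {k : Type*} [Field k] {ι₀ ι₁ ι₂ : Type*} [Fintype ι₀] [Fintype ι₁] [Fintype ι₂]
  [DecidableEq ι₁] {D : Matrix ι₁ ι₀ k} {D' : Matrix ι₂ ι₁ k}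

theorem exists_contraction_of_exact
    (hD : ∀ w, D'.mulVec w = 0 → ∃ v, D.mulVec v = w) :
    ∃ (h : Matrix ι₀ ι₁ k) (h' : Matrix ι₁ ι₂ k), D * h + h' * D' = 1 := by
  classical
  have : Module.Injective k (ι₁ → k) := Module.injective_of_isSemisimpleRing k _
  obtain ⟨s, hs⟩ := D.toLin'.rangeRestrict.exists_rightInverse_of_surjective
    D.toLin'.range_rangeRestrict
  obtain ⟨h, hh⟩ := LinearMap.exists_extend s
  have section_on_range (v) : D.toLin' (h (D.toLin' v)) = D.toLin' v := by
    have hv : h (D.toLin' v) = s (D.toLin'.rangeRestrict v) :=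
      LinearMap.congr_fun hh (D.toLin'.rangeRestrict v)
    rw [hv]
    exact congrArg Subtype.val (LinearMap.congr_fun hs (D.toLin'.rangeRestrict v))
  obtain ⟨h', hh'⟩ := exists_comp_eq_of_ker_le_ker D'.toLin' (LinearMap.id - D.toLin' ∘ₗ h) <| by
    intro w hw
    obtain ⟨v, rfl⟩ := hD w hw
    exact sub_eq_zero.mpr (section_on_range v).symm
  refine ⟨LinearMap.toMatrix' h, LinearMap.toMatrix' h', Matrix.toLin'.injective ?_⟩
  rw [map_add, Matrix.toLin'_mul, Matrix.toLin'_mul, Matrix.toLin'_toMatrix',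
    Matrix.toLin'_toMatrix', Matrix.toLin'_one, hh', add_sub_cancel]

theorem exact_of_det_ne_zero (hDD' : D' * D = 0) {h : Matrix ι₀ ι₁ k} {h' : Matrix ι₁ ι₂ k}
    (hdet : (D * h + h' * D').det ≠ 0) (w : ι₁ → k) (hw : D'.mulVec w = 0) :
    ∃ v, D.mulVec v = w := by
  set N := D * h + h' * D'
  have injective_N : Function.Injective N.mulVecLin := by
    refine LinearMap.ker_eq_bot.mp (LinearMap.ker_eq_bot'.mpr fun v hv ↦ ?_)
    exact Matrix.eq_zero_of_mulVec_eq_zero hdet hv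
  have mem_range (w) (hw : D'.mulVec w = 0) : N.mulVecLin w ∈ LinearMap.range D.mulVecLin :=
    ⟨h.mulVec w, by simp [N, hw]⟩
  have map_range : (LinearMap.range D.mulVecLin).map N.mulVecLin = LinearMap.range D.mulVecLin := by
    refine Submodule.eq_of_le_of_finrank_eq ?_
      (Submodule.equivMapOfInjective N.mulVecLin injective_N _).finrank_eq.symm
    rintro _ ⟨_, ⟨v, rfl⟩, rfl⟩
    exact mem_range _ (by simp [hDD'])
  obtain ⟨_, ⟨v, rfl⟩, hv⟩ := map_range.ge (mem_range w hw)
  exact ⟨v, injective_N hv⟩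

theorem exact_iff_exists_det_ne_zero (hDD' : D' * D = 0) :
    (∀ w, D'.mulVec w = 0 → ∃ v, D.mulVec v = w) ↔
      ∃ (h : Matrix ι₀ ι₁ k) (h' : Matrix ι₁ ι₂ k), (D * h + h' * D').det ≠ 0 := by
  refine ⟨fun hD ↦ ?_, fun ⟨_, _, hdet⟩ ↦ exact_of_det_ne_zero hDD' hdet⟩
  obtain ⟨h, h', hh⟩ := exists_contraction_of_exact hD
  exact ⟨h, h', by simp [hh]⟩

end Determinant

section StructureConstants

variable {k A : Type*} [Field k] [Ring A] {ι κ : Type*} {K : Type*} [AddCommGroup K] [Module k K]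
  [Module A K] (β : Module.Basis κ k K)

/-- The coordinates of a linear map out of a finite free module. -/
noncomputable def homCoordinates [Finite κ] (n : ℕ) : ((Fin n → A) →ₗ[A] K) ≃+ (Fin n × κ → k) :=
  ((Pi.basisFun A (Fin n)).constr ℤ).symm.toAddEquiv.trans <|
    (AddEquiv.piCongrRight fun _ ↦ β.equivFun.toAddEquiv).trans
      { (Equiv.curry (Fin n) κ k).symm with map_add' := fun _ _ ↦ rfl }

theorem homCoordinates_apply [Finite κ] {n : ℕ} (φ : (Fin n → A) →ₗ[A] K) (p : Fin n) (j : κ) :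
    homCoordinates β n φ (p, j) = β.repr (φ (Pi.single p 1)) j := by
  simp [homCoordinates, Equiv.curry, Module.Basis.constr]

variable [Algebra k A] (b : Module.Basis ι k A)

/-- The coordinates of the `A`-action on a module with basis `β`: the entry at `(α, i, j)` is the
coefficient of `β i` in `b α • β j`. They turn the modules with a fixed basis index into the points
of an affine space. -/
noncomputable def structureConstants : ι × κ × κ → k :=
  fun x ↦ β.repr (b x.1 • β x.2.2) x.2.1

/-- The matrix of `φ ↦ φ ∘ₗ d` on linear maps into a module with basis index `κ`, with the
structure constants of that module as indeterminates. -/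
noncomputable def genericMatrix (κ : Type*) [Fintype ι] {n n' : ℕ}
    (d : (Fin n' → A) →ₗ[A] (Fin n → A)) :
    Matrix (Fin n' × κ) (Fin n × κ) (MvPolynomial (ι × κ × κ) k) :=
  Matrix.of fun qi pj ↦ ∑ α, MvPolynomial.C (b.repr (d (Pi.single qi.1 1) pj.1) α) *
    MvPolynomial.X (α, qi.2, pj.2)

/-- The `genericMatrix` at the structure constants of the module with basis `β`. -/
noncomputable def evalMatrix [Fintype ι] {n n' : ℕ} (d : (Fin n' → A) →ₗ[A] (Fin n → A)) :
    Matrix (Fin n' × κ) (Fin n × κ) k :=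
  (genericMatrix b κ d).map (MvPolynomial.eval (structureConstants β b))

variable [Fintype ι] [Fintype κ] {n₀ n₁ n₂ : ℕ}

/-- A determinant in the structure constants of an unspecified module; for all choices of `h` and
`h'` together they detect the exactness of `Hom(Aⁿ⁰, K) → Hom(Aⁿ¹, K) → Hom(Aⁿ², K)`. -/
noncomputable def homotopyDeterminant [DecidableEq κ] (d : (Fin n₁ → A) →ₗ[A] (Fin n₀ → A))
    (d' : (Fin n₂ → A) →ₗ[A] (Fin n₁ → A)) (h : Matrix (Fin n₀ × κ) (Fin n₁ × κ) k)
    (h' : Matrix (Fin n₁ × κ) (Fin n₂ × κ) k) : MvPolynomial (ι × κ × κ) k :=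
  let hC : Matrix (Fin n₀ × κ) (Fin n₁ × κ) (MvPolynomial (ι × κ × κ) k) :=
    h.map MvPolynomial.C
  let hC' : Matrix (Fin n₁ × κ) (Fin n₂ × κ) (MvPolynomial (ι × κ × κ) k) :=
    h'.map MvPolynomial.C
  (genericMatrix b κ d * hC + hC' * genericMatrix b κ d').det

theorem eval_homotopyDeterminant [DecidableEq κ] (d : (Fin n₁ → A) →ₗ[A] (Fin n₀ → A))
    (d' : (Fin n₂ → A) →ₗ[A] (Fin n₁ → A)) (h : Matrix (Fin n₀ × κ) (Fin n₁ × κ) k)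
    (h' : Matrix (Fin n₁ × κ) (Fin n₂ × κ) k) :
    MvPolynomial.eval (structureConstants β b) (homotopyDeterminant b d d' h h') =
      (evalMatrix β b d * h + h' * evalMatrix β b d').det := by
  have eval_C {m n : Type _} (g : Matrix m n k) :
      (g.map MvPolynomial.C).map (MvPolynomial.eval (structureConstants β b)) = g := by
    ext; simp
  rw [homotopyDeterminant, RingHom.map_det, map_add, RingHom.mapMatrix_apply,
    RingHom.mapMatrix_apply, Matrix.map_mul, Matrix.map_mul, eval_C, eval_C, evalMatrix, evalMatrix]

variable [IsScalarTower k A K]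

theorem repr_smul_eq_sum_structureConstants (c : A) (x : K) (i : κ) :
    β.repr (c • x) i =
      ∑ j, (∑ α, b.repr c α * structureConstants β b (α, i, j)) * β.repr x j := by
  have smul_left_comm (r : k) (a : A) (y : K) : a • r • y = r • a • y := by
    rw [← algebraMap_smul A r y, ← algebraMap_smul A r (a • y), ← mul_smul, ← mul_smul,
      Algebra.commutes]
  have expand : c • x = ∑ j, ∑ α, (β.repr x j * b.repr c α) • b α • β j := by
    conv_lhs => rw [← β.sum_repr x, ← b.sum_repr c]
    simp only [Finset.smul_sum, Finset.sum_smul, smul_assoc, smul_left_comm, mul_smul]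
  rw [expand]
  simp only [map_sum, map_smul, Finsupp.finsetSum_apply, Finsupp.smul_apply, smul_eq_mul,
    structureConstants, Finset.sum_mul]
  exact Finset.sum_congr rfl fun j _ ↦ Finset.sum_congr rfl fun α _ ↦ by ring

theorem homCoordinates_comp (d : (Fin n₁ → A) →ₗ[A] (Fin n₀ → A)) (φ : (Fin n₀ → A) →ₗ[A] K) :
    homCoordinates β n₁ (φ ∘ₗ d) = (evalMatrix β b d).mulVec (homCoordinates β n₀ φ) := by
  ext ⟨q, i⟩
  have expand : φ (d (Pi.single q 1)) = ∑ p, d (Pi.single q 1) p • φ (Pi.single p 1) := by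
    conv_lhs => rw [pi_eq_sum_univ' (d (Pi.single q 1))]
    simp only [map_sum, map_smul]
  rw [homCoordinates_apply, LinearMap.comp_apply, expand]
  simp only [map_sum, Finsupp.finsetSum_apply, repr_smul_eq_sum_structureConstants β b,
    Matrix.mulVec, dotProduct, Fintype.sum_prod_type, evalMatrix, genericMatrix, Matrix.map_apply,
    Matrix.of_apply, map_mul, MvPolynomial.eval_C, MvPolynomial.eval_X, homCoordinates_apply]

theorem evalMatrix_mul_eq_zero {d : (Fin n₁ → A) →ₗ[A] (Fin n₀ → A)}
    {d' : (Fin n₂ → A) →ₗ[A] (Fin n₁ → A)} (hdd' : d ∘ₗ d' = 0) :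
    evalMatrix β b d' * evalMatrix β b d = 0 := by
  classical
  refine Matrix.toLin'.injective (LinearMap.ext fun v ↦ ?_)
  obtain ⟨φ, rfl⟩ := (homCoordinates (A := A) β n₀).surjective v
  rw [Matrix.toLin'_apply, ← Matrix.mulVec_mulVec, ← homCoordinates_comp, ← homCoordinates_comp,
    LinearMap.comp_assoc, hdd', LinearMap.comp_zero, map_zero, map_zero, LinearMap.zero_apply]

theorem hom_exact_iff_mulVec_exact (d : (Fin n₁ → A) →ₗ[A] (Fin n₀ → A))
    (d' : (Fin n₂ → A) →ₗ[A] (Fin n₁ → A)) :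
    (∀ g : (Fin n₁ → A) →ₗ[A] K, g ∘ₗ d' = 0 → ∃ h : (Fin n₀ → A) →ₗ[A] K, h ∘ₗ d = g) ↔
      ∀ w, (evalMatrix β b d').mulVec w = 0 → ∃ v, (evalMatrix β b d).mulVec v = w := by
  rw [(homCoordinates (A := A) β n₁).surjective.forall]
  refine forall_congr' fun g ↦ ?_
  rw [(homCoordinates (A := A) β n₀).surjective.exists]
  simp only [← homCoordinates_comp, EmbeddingLike.map_eq_zero_iff, EmbeddingLike.apply_eq_iff_eq]

theorem hom_exact_iff_exists_homotopyDeterminant_ne_zero [DecidableEq κ]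
    {d : (Fin n₁ → A) →ₗ[A] (Fin n₀ → A)} {d' : (Fin n₂ → A) →ₗ[A] (Fin n₁ → A)}
    (hdd' : d ∘ₗ d' = 0) :
    (∀ g : (Fin n₁ → A) →ₗ[A] K, g ∘ₗ d' = 0 → ∃ h : (Fin n₀ → A) →ₗ[A] K, h ∘ₗ d = g) ↔
      ∃ h h', MvPolynomial.eval (structureConstants β b) (homotopyDeterminant b d d' h h') ≠ 0 := by
  simp only [eval_homotopyDeterminant]
  rw [hom_exact_iff_mulVec_exact β b,
    exact_iff_exists_det_ne_zero (evalMatrix_mul_eq_zero β b hdd')]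

end StructureConstants

theorem exists_bound_eval_ne_zero {k σ : Type*} [Field k] [Finite σ]
    (S : ℕ → Set (MvPolynomial σ k)) :
    ∃ N, ∀ x : σ → k, (∃ l, ∃ s ∈ S l, MvPolynomial.eval x s ≠ 0) →
      ∃ l ≤ N, ∃ s ∈ S l, MvPolynomial.eval x s ≠ 0 := by
  let I : ℕ →o Ideal (MvPolynomial σ k) :=
    ⟨fun d ↦ ⨆ l ≤ d, Ideal.span (S l), fun _ _ hab ↦
      biSup_mono fun _ hl ↦ hl.trans hab⟩
  obtain ⟨N, hN⟩ := monotone_stabilizes_iff_noetherian.mpr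
    (inferInstance : IsNoetherian (MvPolynomial σ k) (MvPolynomial σ k)) I
  refine ⟨N, fun x ⟨l, s, hs, hsx⟩ ↦ ?_⟩
  by_contra! vanish
  have le_ker : I N ≤ RingHom.ker (MvPolynomial.eval x) :=
    iSup₂_le fun l hl ↦ Ideal.span_le.mpr (vanish l hl)
  have mem_I : s ∈ I (max N l) :=
    Submodule.mem_iSup_of_mem l
      (Submodule.mem_iSup_of_mem (le_max_right N l) (Ideal.subset_span hs))
  exact hsx (le_ker (hN _ (le_max_left N l) ▸ mem_I))

section

variable {k A : Type u} [Field k] [Ring A] [Algebra k A] [FiniteDimensional k A]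

theorem exists_polynomials_subsingleton_ext_iff {ι : Type*} [Finite ι] (b : Module.Basis ι k A)
    (κ : Type*) [Finite κ] (Z : ModuleCat.{u} A) [Module.Finite A Z] (l : ℕ) :
    ∃ S : Set (MvPolynomial (ι × κ × κ) k), ∀ (K : Type u) [AddCommGroup K] [Module k K]
      [Module A K] [IsScalarTower k A K] (β : Module.Basis κ k K),
      Subsingleton (Ext Z (ModuleCat.of A K) (l + 1)) ↔
        ∃ s ∈ S, MvPolynomial.eval (structureConstants β b) s ≠ 0 := by
  classical
  have := Fintype.ofFinite ι
  have := Fintype.ofFinite κ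
  have := IsNoetherianRing.of_finite k A
  obtain ⟨Y, _, hY⟩ := exists_subsingleton_ext_iff_ext_one Z l
  obtain ⟨n₀, n₁, n₂, d, d', hdd', hd⟩ := exists_subsingleton_ext_one_iff Y
  refine ⟨{s | ∃ h h', homotopyDeterminant b d d' h h' = s}, fun K _ _ _ _ β ↦ ?_⟩
  rw [hY, hd, hom_exact_iff_exists_homotopyDeterminant_ne_zero β b hdd']
  simp

variable (k A) in
theorem exists_bound_injectiveDimension_of_finrank_eq (m : ℕ) :
    ∃ N, ∀ (K : Type u) [AddCommGroup K] [Module k K] [Module A K] [IsScalarTower k A K]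
      [FiniteDimensional k K], Module.finrank k K = m →
      (∃ n, HasInjectiveDimensionLT (ModuleCat.of A K) n) →
        HasInjectiveDimensionLT (ModuleCat.of A K) N := by
  have := IsArtinianRing.of_finite k A
  choose S hS using exists_polynomials_subsingleton_ext_iff (Module.finBasis k A) (Fin m)
    (ModuleCat.of A (A ⧸ Ring.jacobson A))
  obtain ⟨N, hN⟩ := exists_bound_eval_ne_zero S
  refine ⟨N + 1, fun K _ _ _ _ _ hm ⟨n, hn⟩ ↦ ?_⟩
  let β := Module.finBasisOfFinrankEq k K hm
  obtain ⟨l, hl, nonvanishing⟩ := hN (structureConstants β _)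
    ⟨n, (hS n K β).mp (HasInjectiveDimensionLT.subsingleton _ n (n + 1) n.le_succ _)⟩
  have := hasInjectiveDimensionLT_of_subsingleton_ext_jacobson ((hS l K β).mpr nonvanishing)
  exact hasInjectiveDimensionLT_of_ge _ (l + 1) (N + 1) (by lia)

variable (k A) in
theorem exists_bound_injectiveDimension (C : ℕ) :
    ∃ N, ∀ (K : Type u) [AddCommGroup K] [Module k K] [Module A K] [IsScalarTower k A K]
      [FiniteDimensional k K], Module.finrank k K ≤ C →
      (∃ n, HasInjectiveDimensionLT (ModuleCat.of A K) n) →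
        HasInjectiveDimensionLT (ModuleCat.of A K) N := by
  choose N hN using exists_bound_injectiveDimension_of_finrank_eq k A
  refine ⟨(Finset.range (C + 1)).sup N, fun K _ _ _ _ _ hC hK ↦ ?_⟩
  have := hN _ K rfl hK
  exact hasInjectiveDimensionLT_of_ge _ (N (Module.finrank k K)) _
    (Finset.le_sup (f := N) (Finset.mem_range.mpr (by lia)))

end

end UniformBound

section Coresolution

open CategoryTheory

universe u

theorem injective_of_bounded_coresolution (k : Type u) {A : Type u} [Field k] [Ring A]
    [Algebra k A] [FiniteDimensional k A] {K I : ℕ → Type u}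
    [∀ t, AddCommGroup (K t)] [∀ t, Module k (K t)] [∀ t, Module A (K t)]
    [∀ t, IsScalarTower k A (K t)] [∀ t, FiniteDimensional k (K t)] [∀ t, AddCommGroup (I t)]
    [∀ t, Module A (I t)] [∀ t, Module.Injective A (I t)] {i : ∀ t, K (t + 1) →ₗ[A] I t}
    {p : ∀ t, I t →ₗ[A] K t} (hi : ∀ t, Function.Injective (i t))
    (hip : ∀ t, Function.Exact (i t) (p t)) (hp : ∀ t, Function.Surjective (p t)) {C : ℕ}
    (hC : ∀ t, Module.finrank k (K t) ≤ C) [Subsingleton (K 0)] (t : ℕ) :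
    Module.Injective A (K t) := by
  have shortExact (t) := ModuleCat.shortComplex_shortExact
    (ModuleCat.shortComplexOfCompEqZero (i t) (p t) (hip t).linearMap_comp_eq_zero)
    (hip t) (hi t) (hp t)
  have injective_I (t n) : HasInjectiveDimensionLT (ModuleCat.of A (I t)) (n + 1) :=
    have : Injective (ModuleCat.of A (I t)) := Module.injective_object_of_injective_module A (I t)
    hasInjectiveDimensionLT_of_ge _ 1 _ (by lia)
  have finite_injectiveDimension (t) :
      HasInjectiveDimensionLT (ModuleCat.of A (K t)) t := by
    induction t with
    | zero => exact (ModuleCat.isZero_of_subsingleton _).hasInjectiveDimensionLT_zero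
    | succ t ih => exact (shortExact t).hasInjectiveDimensionLT_X₁ t ih (injective_I t t)
  have descend (l) : HasInjectiveDimensionLT (ModuleCat.of A (K (t + l))) (l + 1) →
      HasInjectiveDimensionLT (ModuleCat.of A (K t)) 1 := by
    induction l with
    | zero => exact id
    | succ l ih =>
      exact fun h ↦ ih ((shortExact (t + l)).hasInjectiveDimensionLT_X₃ (l + 1) (injective_I _ _) h)
  obtain ⟨N, hN⟩ := exists_bound_injectiveDimension k A C
  have := hN (K (t + N)) (hC _) ⟨_, finite_injectiveDimension _⟩
  have := descend N (hasInjectiveDimensionLT_of_ge _ N _ N.le_succ)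
  exact Module.injective_module_of_injective_object A (K t)
    (inj := (inferInstance : Injective (ModuleCat.of A (K t))))

end Coresolution

section ProjectiveDimension

open CategoryTheory

variable {R : Type} [Ring R] {M : Type} [AddCommGroup M] [Module R M]

theorem projDimLE_zero [Module.Projective R M] : ProjDimLE R M 0 := by
  refine ⟨fun i ↦ Nat.casesOn i (ModuleCat.of R M) fun _ ↦ ModuleCat.of R PUnit, fun _ ↦ 0,
    LinearMap.id, ?_, Function.surjective_id, by simp, fun i ↦ ?_, ?_⟩
  · rintro (_ | i)
    exacts [‹Module.Projective R M›, inferInstanceAs (Module.Projective R PUnit)]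
  · exact Subsingleton.elim (α := Submodule R PUnit) _ _
  · rintro (_ | i) hi
    exacts [absurd hi (by lia), inferInstanceAs (Subsingleton PUnit)]

theorem ProjDimLE.succ_of_ker {P : Type} [AddCommGroup P] [Module R P] [Module.Projective R P]
    {π : P →ₗ[R] M} (hπ : Function.Surjective π) {d : ℕ} (h : ProjDimLE R (LinearMap.ker π) d) :
    ProjDimLE R M (d + 1) := by
  obtain ⟨Q, f, ε, projective, surjective, exact_zero, exact_succ, vanish⟩ := h
  refine ⟨fun i ↦ Nat.casesOn i (ModuleCat.of R P) Q,
    fun i ↦ Nat.casesOn i ((LinearMap.ker π).subtype ∘ₗ ε) f, π, ?_, hπ, ?_, ?_, ?_⟩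
  · rintro (_ | i)
    exacts [‹Module.Projective R P›, projective i]
  · change LinearMap.range ((LinearMap.ker π).subtype ∘ₗ ε) = _
    rw [LinearMap.range_comp_of_range_eq_top _ (LinearMap.range_eq_top.mpr surjective),
      Submodule.range_subtype]
  · rintro (_ | i)
    · change LinearMap.range (f 0) = LinearMap.ker ((LinearMap.ker π).subtype ∘ₗ ε)
      rw [LinearMap.ker_comp_of_ker_eq_bot _ (Submodule.ker_subtype _), exact_zero]
    · exact exact_succ i
  · rintro (_ | i) hi
    exacts [absurd hi (by lia), vanish i (by lia)]

theorem projDimLE_of_hasProjectiveDimensionLT (d : ℕ) (M : Type) [AddCommGroup M] [Module R M]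
    [HasProjectiveDimensionLT (ModuleCat.of R M) (d + 1)] : ProjDimLE R M d := by
  induction d generalizing M with
  | zero =>
    have : Module.Projective R M := (IsProjective.iff_projective M).mpr inferInstance
    exact projDimLE_zero
  | succ d ih =>
    have surjective := Finsupp.linearCombination_id_surjective R M
    have projective : Projective (ModuleCat.of R (M →₀ R)) :=
      (IsProjective.iff_projective _).mp inferInstance
    have : HasProjectiveDimensionLT (ModuleCat.of R
        (LinearMap.ker (Finsupp.linearCombination R (id : M → M)))) (d + 1) :=
      (LinearMap.shortExact_shortComplexKer surjective).hasProjectiveDimensionLT_X₁ (d + 1)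
        (hasProjectiveDimensionLT_of_ge (ModuleCat.of R (M →₀ R)) 1 (d + 1) (by lia)) ‹_›
    exact .succ_of_ker surjective (ih _)

end ProjectiveDimension

section TrivialExtensionModules

open TrivSqZeroExt

universe u

variable {A D : Type u} [Ring A] [AddCommGroup D] [Module A D] [Module Aᵐᵒᵖ D]
  [SMulCommClass A Aᵐᵒᵖ D]

instance isScalarTower_trivSqZeroExt :
    IsScalarTower A (TrivSqZeroExt A D) (TrivSqZeroExt A D) where
  smul_assoc a s t := by ext <;> simp [mul_assoc, mul_smul, smul_add, smul_comm]

theorem inr_mem_jacobson (δ : D) :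
    (inr δ : TrivSqZeroExt A D) ∈ Ring.jacobson (TrivSqZeroExt A D) := by
  rw [← Ideal.jacobson_bot, Ideal.mem_jacobson_iff]
  refine fun y ↦ ⟨1 - y * inr δ, ?_⟩
  have inr_mul_mul_inr : inr δ * (y * inr δ) = 0 := by ext <;> simp
  have : (1 - y * inr δ) * y * inr δ + (1 - y * inr δ) - 1 = -(y * (inr δ * (y * inr δ))) := by
    noncomm_ring
  rw [this, inr_mul_mul_inr]
  simp

variable {M N : Type u} [AddCommGroup M] [Module (TrivSqZeroExt A D) M] [Module A M]
  [AddCommGroup N] [Module (TrivSqZeroExt A D) N] [Module A N]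

section ScalarTower

variable [IsScalarTower A (TrivSqZeroExt A D) M] [IsScalarTower A (TrivSqZeroExt A D) N]

theorem inl_smul_eq_smul (a : A) (m : M) : (inl a : TrivSqZeroExt A D) • m = a • m := by
  have : (inl a : TrivSqZeroExt A D) = a • 1 := by ext <;> simp
  rw [this, smul_assoc, one_smul]

theorem smul_eq_fst_smul_add_inr_snd_smul (t : TrivSqZeroExt A D) (m : M) :
    t • m = t.fst • m + (inr t.snd : TrivSqZeroExt A D) • m := by
  conv_lhs => rw [← inl_fst_add_inr_snd_eq t, add_smul, inl_smul_eq_smul]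

/-- An `A`-linear map commuting with the action of `D` is linear over the trivial extension. -/
def linearMapOfInr (φ : M →ₗ[A] N)
    (h : ∀ (δ : D) m,
      φ ((inr δ : TrivSqZeroExt A D) • m) = (inr δ : TrivSqZeroExt A D) • φ m) :
    M →ₗ[TrivSqZeroExt A D] N where
  toFun := φ
  map_add' := φ.map_add
  map_smul' t m := by
    rw [smul_eq_fst_smul_add_inr_snd_smul t m, map_add, map_smul, h, RingHom.id_apply,
      ← smul_eq_fst_smul_add_inr_snd_smul]

end ScalarTower

variable (A D M) in
/-- A bounded `ℕ`-grading on a module over the trivial extension of `A` by `D`, where `A` sits in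
degree zero and `D` in degree one. It is encoded by the `A`-linear projections onto the homogeneous
components. -/
structure TrivExtGrading where
  proj : ℕ → M →ₗ[A] M
  proj_succ_inr_smul (j : ℕ) (δ : D) (m : M) :
    proj (j + 1) ((inr δ : TrivSqZeroExt A D) • m) = (inr δ : TrivSqZeroExt A D) • proj j m
  proj_zero_inr_smul (δ : D) (m : M) : proj 0 ((inr δ : TrivSqZeroExt A D) • m) = 0
  proj_proj (i j : ℕ) (m : M) : proj i (proj j m) = if i = j then proj j m else 0
  len : ℕ
  sum_proj (m : M) : ∑ j ∈ Finset.range len, proj j m = m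

namespace TrivExtGrading

variable (G : TrivExtGrading A D M) (H : TrivExtGrading A D N)

theorem proj_proj_self (i : ℕ) (m : M) : G.proj i (G.proj i m) = G.proj i m := by
  rw [G.proj_proj, if_pos rfl]

theorem proj_proj_of_ne {i j : ℕ} (h : i ≠ j) (m : M) : G.proj i (G.proj j m) = 0 := by
  rw [G.proj_proj, if_neg h]

theorem ext_proj {x y : M} (h : ∀ j, G.proj j x = G.proj j y) : x = y := by
  rw [← G.sum_proj x, ← G.sum_proj y]
  exact Finset.sum_congr rfl fun j _ ↦ h j

theorem proj_eq_zero_of_len_le {j : ℕ} (hj : G.len ≤ j) (m : M) : G.proj j m = 0 := by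
  rw [← G.sum_proj m, map_sum]
  refine Finset.sum_eq_zero fun i hi ↦ G.proj_proj_of_ne ?_ m
  exact ((Finset.mem_range.1 hi).trans_le hj).ne'

theorem inr_smul_eq_zero_of_proj_eq_self {n : ℕ} (hn : ∀ x, G.proj (n + 1) x = 0) {x : M}
    (hx : G.proj n x = x) (δ : D) : (inr δ : TrivSqZeroExt A D) • x = 0 := by
  rw [← hx, ← G.proj_succ_inr_smul, hn]

/-- The grading concentrated in degree zero on a module killed by `D`. -/
def concentrated (h : ∀ (δ : D) (m : M), (inr δ : TrivSqZeroExt A D) • m = 0) :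
    TrivExtGrading A D M where
  proj j := if j = 0 then LinearMap.id else 0
  proj_succ_inr_smul j δ m := by simp [h]
  proj_zero_inr_smul δ m := by simp [h]
  proj_proj i j m := by cases i <;> cases j <;> simp
  len := 1
  sum_proj m := by simp

/-- A submodule of a graded module is homogeneous if it is stable under taking homogeneous
components. -/
def IsHomogeneous (S : Submodule (TrivSqZeroExt A D) M) : Prop :=
  ∀ ⦃x⦄, x ∈ S → ∀ j, G.proj j x ∈ S

/-- The linear maps between graded modules that preserve degrees. -/
def IsGradedMap (φ : M →ₗ[TrivSqZeroExt A D] N) : Prop :=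
  ∀ j x, φ (G.proj j x) = H.proj j (φ x)

variable {G H} in
theorem IsGradedMap.isHomogeneous_ker {φ : M →ₗ[TrivSqZeroExt A D] N} (hφ : G.IsGradedMap H φ) :
    G.IsHomogeneous (LinearMap.ker φ) := fun x hx j ↦ by
  rw [LinearMap.mem_ker] at hx ⊢
  rw [hφ, hx, map_zero]

variable {G} in
theorem IsGradedMap.pow {φ : Module.End (TrivSqZeroExt A D) M} (hφ : G.IsGradedMap G φ) (n : ℕ) :
    G.IsGradedMap G (φ ^ n) := by
  induction n with
  | zero => exact fun j x ↦ rfl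
  | succ n ih => exact fun j x ↦ by simp only [pow_succ', Module.End.mul_apply, ih j x, hφ j]

/-- The endomorphism acting in degree `i` as the degree-preserving part of `φ i`. -/
def diagonal (φ : ℕ → M →ₗ[A] M) : M →ₗ[A] M :=
  ∑ i ∈ Finset.range G.len, G.proj i ∘ₗ φ i ∘ₗ G.proj i

theorem diagonal_apply (φ : ℕ → M →ₗ[A] M) (x : M) :
    G.diagonal φ x = ∑ i ∈ Finset.range G.len, G.proj i (φ i (G.proj i x)) := by
  simp [diagonal]

theorem proj_diagonal (φ : ℕ → M →ₗ[A] M) (l : ℕ) (x : M) :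
    G.proj l (G.diagonal φ x) = G.proj l (φ l (G.proj l x)) := by
  rw [diagonal_apply, map_sum]
  simp only [G.proj_proj, Finset.sum_ite_eq, Finset.mem_range]
  split_ifs with hl
  · rfl
  · exact (G.proj_eq_zero_of_len_le (not_lt.1 hl) _).symm

variable [IsScalarTower A (TrivSqZeroExt A D) M]

theorem proj_mem_jacobson_smul_top (j : ℕ) {x : M}
    (hx : x ∈ Ring.jacobson (TrivSqZeroExt A D) • (⊤ : Submodule (TrivSqZeroExt A D) M)) :
    G.proj j x ∈ Ring.jacobson (TrivSqZeroExt A D) • (⊤ : Submodule (TrivSqZeroExt A D) M) := by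
  refine Submodule.smul_induction_on hx (fun t ht m _ ↦ ?_)
    fun x y hx hy ↦ (map_add (G.proj j) x y).symm ▸ add_mem hx hy
  have inr_smul_mem (m : M) : (inr t.snd : TrivSqZeroExt A D) • m ∈
      Ring.jacobson (TrivSqZeroExt A D) • (⊤ : Submodule (TrivSqZeroExt A D) M) :=
    Submodule.smul_mem_smul (inr_mem_jacobson _) trivial
  rw [smul_eq_fst_smul_add_inr_snd_smul t m, map_add, map_smul]
  refine add_mem ?_ ?_
  · rw [← add_sub_cancel_right (t.fst • G.proj j m) ((inr t.snd : TrivSqZeroExt A D) • G.proj j m),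
      ← smul_eq_fst_smul_add_inr_snd_smul t]
    exact sub_mem (Submodule.smul_mem_smul ht trivial) (inr_smul_mem _)
  · cases j with
    | zero => exact (G.proj_zero_inr_smul _ _).symm ▸ zero_mem _
    | succ j => exact (G.proj_succ_inr_smul _ _ _).symm ▸ inr_smul_mem _

/-- The grading induced on a homogeneous submodule. -/
def restrict {S : Submodule (TrivSqZeroExt A D) M} (hS : G.IsHomogeneous S) :
    TrivExtGrading A D S where
  proj j := (G.proj j).restrict (p := S.restrictScalars A) (q := S.restrictScalars A)
    fun x hx ↦ hS hx j
  proj_succ_inr_smul j δ m := Subtype.ext (G.proj_succ_inr_smul j δ m)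
  proj_zero_inr_smul δ m := Subtype.ext (G.proj_zero_inr_smul δ m)
  proj_proj i j m := Subtype.ext <| (G.proj_proj i j m).trans <| by split_ifs <;> rfl
  len := G.len
  sum_proj m := Subtype.ext <| (Submodule.coe_sum _ _ _).trans <| G.sum_proj m

/-- The map `TrivExtGrading.diagonal φ` as an endomorphism over the trivial extension, when the
`φ i` are compatible with the action of `D`. -/
def diagonalEnd (φ : ℕ → M →ₗ[A] M)
    (hφ : ∀ i (δ : D) x, G.proj (i + 1) (φ (i + 1) ((inr δ : TrivSqZeroExt A D) • G.proj i x)) =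
      (inr δ : TrivSqZeroExt A D) • G.proj i (φ i (G.proj i x))) :
    Module.End (TrivSqZeroExt A D) M :=
  linearMapOfInr (G.diagonal φ) fun δ x ↦ G.ext_proj fun j ↦ by
    rw [G.proj_diagonal]
    cases j with
    | zero => simp only [G.proj_zero_inr_smul, map_zero]
    | succ j => rw [G.proj_succ_inr_smul, G.proj_succ_inr_smul, hφ, G.proj_diagonal]

/-- The degree-preserving part of an endomorphism of a graded module. -/
def degreeZeroPart (g : Module.End (TrivSqZeroExt A D) M) : Module.End (TrivSqZeroExt A D) M :=
  G.diagonalEnd (fun _ ↦ g.restrictScalars A) fun i δ x ↦ by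
    simp only [LinearMap.coe_restrictScalars, map_smul, G.proj_succ_inr_smul]

theorem degreeZeroPart_apply (g : Module.End (TrivSqZeroExt A D) M) (x : M) :
    G.degreeZeroPart g x = ∑ i ∈ Finset.range G.len, G.proj i (g (G.proj i x)) :=
  G.diagonal_apply _ x

theorem isGradedMap_degreeZeroPart (g : Module.End (TrivSqZeroExt A D) M) :
    G.IsGradedMap G (G.degreeZeroPart g) := fun l x ↦ G.ext_proj fun i ↦ by
  have proj_degreeZeroPart (j : ℕ) (y : M) :
      G.proj j (G.degreeZeroPart g y) = G.proj j (g (G.proj j y)) := G.proj_diagonal _ j y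
  rw [proj_degreeZeroPart, G.proj_proj, G.proj_proj]
  split_ifs with h
  · rw [h, proj_degreeZeroPart]
  · rw [map_zero, map_zero]

end TrivExtGrading

end TrivialExtensionModules

section ProjectiveCover

variable {R P M : Type*} [Ring R] [AddCommGroup P] [Module R P] [AddCommGroup M] [Module R M]

/-- A projective cover of a module over a semiprimary ring: a surjection from a projective module
whose kernel is superfluous, that is, contained in the radical. -/
structure IsProjectiveCover (π : P →ₗ[R] M) : Prop where
  projective : Module.Projective R P
  surjective : Function.Surjective π
  ker_le_jacobson_smul_top : LinearMap.ker π ≤ Ring.jacobson R • ⊤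

theorem ker_le_of_isNilpotent {π : P →ₗ[R] M} {g : Module.End R P} {S : Submodule R P}
    (hπg : π ∘ₗ g = 0) (hgS : ∀ x ∈ LinearMap.ker π, g x - x ∈ S) (hg : IsNilpotent g) :
    LinearMap.ker π ≤ S := by
  intro x hx
  obtain ⟨n, hn⟩ := hg
  have pow_sub_mem (m : ℕ) : (g ^ m) x ∈ LinearMap.ker π ∧ (g ^ m) x - x ∈ S := by
    induction m with
    | zero => simpa using hx
    | succ m ih =>
      rw [pow_succ', Module.End.mul_apply]
      exact ⟨LinearMap.congr_fun hπg _, sub_add_sub_cancel (g _) _ x ▸ add_mem (hgS _ ih.1) ih.2⟩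
  simpa [hn] using (pow_sub_mem n).2

variable [IsSemiprimaryRing R]

theorem isNilpotent_of_range_le_jacobson_smul_top {g : Module.End R P}
    (hg : LinearMap.range g ≤ Ring.jacobson R • ⊤) : IsNilpotent g := by
  obtain ⟨s, hs⟩ := IsSemiprimaryRing.isNilpotent (R := R)
  have range_pow_le (n : ℕ) : LinearMap.range (g ^ n) ≤ Ring.jacobson R ^ n • ⊤ := by
    induction n with
    | zero => rw [Submodule.pow_zero, Ideal.one_eq_top, Submodule.top_smul]; exact le_top
    | succ n ih =>
      calc LinearMap.range (g ^ (n + 1)) = (LinearMap.range (g ^ n)).map g := by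
            rw [pow_succ', Module.End.mul_eq_comp, LinearMap.range_comp]
        _ ≤ (Ring.jacobson R ^ n • ⊤ : Submodule R P).map g := Submodule.map_mono ih
        _ = Ring.jacobson R ^ n • LinearMap.range g := by
            rw [Submodule.map_smul'', Submodule.map_top]
        _ ≤ Ring.jacobson R ^ (n + 1) • ⊤ := by
            rw [Submodule.pow_succ, Submodule.mul_smul]
            exact Submodule.smul_mono le_rfl hg
  refine ⟨s, LinearMap.range_eq_bot.1 (le_bot_iff.1 ((range_pow_le s).trans_eq ?_))⟩
  rw [hs, Submodule.zero_eq_bot, Submodule.bot_smul]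

-- The image of `ker π` in the semisimple module `P / JP` is a direct summand; lift a projection
-- onto it to `P`.
theorem exists_comp_eq_zero_and_sub_mem_jacobson_smul_top [Module.Projective R P]
    (π : P →ₗ[R] M) :
    ∃ g : Module.End R P, π ∘ₗ g = 0 ∧
      ∀ x ∈ LinearMap.ker π, g x - x ∈ Ring.jacobson R • (⊤ : Submodule R P) := by
  set J : Submodule R P := Ring.jacobson R • ⊤
  have : IsSemisimpleModule R (P ⧸ J) := isSemisimpleModule_of_isTorsionBySet_jacobson
    (Module.isTorsionBySet_quotient_ideal_smul P _)
  let K := LinearMap.ker π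
  obtain ⟨r, hr⟩ := IsSemisimpleModule.extension_property (K.map J.mkQ).subtype
    (Submodule.subtype_injective _) LinearMap.id
  let q : K →ₗ[R] K.map J.mkQ := J.mkQ.restrict fun x hx ↦ ⟨x, hx, rfl⟩
  have q_surjective : Function.Surjective q := by
    rintro ⟨_, ⟨y, hy, rfl⟩⟩
    exact ⟨⟨y, hy⟩, rfl⟩
  obtain ⟨g, hg⟩ := Module.projective_lifting_property q (r ∘ₗ J.mkQ) q_surjective
  refine ⟨K.subtype ∘ₗ g, LinearMap.ext fun x ↦ (g x).2, fun x hx ↦ ?_⟩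
  have q_g_eq : q (g x) = ⟨J.mkQ x, x, hx, rfl⟩ :=
    (LinearMap.congr_fun hg x).trans (LinearMap.congr_fun hr ⟨J.mkQ x, x, hx, rfl⟩)
  exact (Submodule.Quotient.eq J).1 (congrArg Subtype.val q_g_eq)

namespace IsProjectiveCover

variable {π : P →ₗ[R] M} (hπ : IsProjectiveCover π)
include hπ

theorem isNilpotent_of_comp_eq_zero {g : Module.End R P} (hg : π ∘ₗ g = 0) : IsNilpotent g :=
  isNilpotent_of_range_le_jacobson_smul_top
    ((LinearMap.range_le_ker_iff.2 hg).trans hπ.ker_le_jacobson_smul_top)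

theorem isUnit_of_comp_eq_self {u : Module.End R P} (hu : π ∘ₗ u = π) : IsUnit u := by
  have : IsNilpotent (u - 1) := hπ.isNilpotent_of_comp_eq_zero <| by
    rw [LinearMap.comp_sub, hu, Module.End.one_eq_id, LinearMap.comp_id, sub_self]
  simpa using this.isUnit_one_add

variable {Q N : Type*} [AddCommGroup Q] [Module R Q] [Module.Projective R Q] [AddCommGroup N]
  [Module R N] {σ : Q →ₗ[R] N} (hσ : Function.Surjective σ) {i : M →ₗ[R] N} {r : N →ₗ[R] M}
  (hri : r ∘ₗ i = LinearMap.id)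
include hσ hri

theorem exists_retract_of_retract :
    ∃ (α : P →ₗ[R] Q) (β : Q →ₗ[R] P), β ∘ₗ α = LinearMap.id ∧
      σ ∘ₗ α = i ∘ₗ π ∧ π ∘ₗ β = r ∘ₗ σ := by
  have := hπ.projective
  obtain ⟨α, hα⟩ := Module.projective_lifting_property σ (i ∘ₗ π) hσ
  obtain ⟨β, hβ⟩ := Module.projective_lifting_property π (r ∘ₗ σ) hπ.surjective
  have comp_comp_eq : π ∘ₗ (β ∘ₗ α) = π := by
    rw [← LinearMap.comp_assoc, hβ, LinearMap.comp_assoc, hα, ← LinearMap.comp_assoc, hri,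
      LinearMap.id_comp]
  obtain ⟨u, hu⟩ := hπ.isUnit_of_comp_eq_self comp_comp_eq
  have comp_inv_eq : π ∘ₗ (↑u⁻¹ : Module.End R P) = π := by
    conv_lhs => rw [← comp_comp_eq, ← hu]
    rw [LinearMap.comp_assoc, ← Module.End.mul_eq_comp, u.mul_inv, Module.End.one_eq_id,
      LinearMap.comp_id]
  refine ⟨α, (↑u⁻¹ : Module.End R P) ∘ₗ β, ?_, hα, ?_⟩
  · rw [LinearMap.comp_assoc, ← hu]
    exact u.inv_mul
  · rw [← LinearMap.comp_assoc, comp_inv_eq, hβ]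

theorem exists_retract_ker_of_retract :
    ∃ (i' : LinearMap.ker π →ₗ[R] LinearMap.ker σ) (r' : LinearMap.ker σ →ₗ[R] LinearMap.ker π),
      r' ∘ₗ i' = LinearMap.id := by
  obtain ⟨α, β, hβα, hα, hβ⟩ := hπ.exists_retract_of_retract hσ hri
  have α_mem (x) (hx : x ∈ LinearMap.ker π) : α x ∈ LinearMap.ker σ := by
    rw [LinearMap.mem_ker, ← LinearMap.comp_apply, hα, LinearMap.comp_apply, hx, map_zero]
  have β_mem (y) (hy : y ∈ LinearMap.ker σ) : β y ∈ LinearMap.ker π := by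
    rw [LinearMap.mem_ker, ← LinearMap.comp_apply, hβ, LinearMap.comp_apply, hy, map_zero]
  exact ⟨α.restrict α_mem, β.restrict β_mem,
    LinearMap.ext fun x ↦ Subtype.ext (LinearMap.congr_fun hβα x)⟩

end IsProjectiveCover

end ProjectiveCover

section GradedModules

open TrivSqZeroExt Module

universe u

variable {k A D : Type u} [Field k] [Ring A] [Algebra k A] [AddCommGroup D] [Module k D]
  [Module A D] [Module Aᵐᵒᵖ D] [SMulCommClass A Aᵐᵒᵖ D]

instance finiteDimensional_trivSqZeroExt [FiniteDimensional k A] [FiniteDimensional k D] :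
    FiniteDimensional k (TrivSqZeroExt A D) :=
  inferInstanceAs (FiniteDimensional k (A × D))

section Free

variable {ι : Type u}

/-- The grading on a free module over the trivial extension in which the `i`-th basis vector has
degree `d i`. -/
def TrivExtGrading.free (d : ι → ℕ) (N : ℕ) (hd : ∀ i, d i + 1 < N) :
    TrivExtGrading A D (ι → TrivSqZeroExt A D) where
  proj l :=
    { toFun x i := inl (if d i = l then (x i).fst else 0) +
        inr (if d i + 1 = l then (x i).snd else 0)
      map_add' x y := by ext i <;> by_cases d i = l <;> by_cases d i + 1 = l <;> simp_all
      map_smul' a x := by ext i <;> by_cases d i = l <;> by_cases d i + 1 = l <;> simp_all }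
  proj_succ_inr_smul l δ x := by ext i <;> by_cases d i = l <;> simp_all
  proj_zero_inr_smul δ x := by ext i <;> simp
  proj_proj l l' x := by ext i <;> by_cases l = l' <;> simp_all
  len := N
  sum_proj x := by
    have fst_mem (i : ι) : d i < N := (Nat.lt_succ_self _).trans (hd i)
    ext i <;> simp [fst_sum, snd_sum, fst_mem, hd]

theorem TrivExtGrading.free_proj_apply (d : ι → ℕ) (N : ℕ) (hd : ∀ i, d i + 1 < N) (l : ℕ)
    (x : ι → TrivSqZeroExt A D) (i : ι) :
    (TrivExtGrading.free d N hd).proj l x i =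
      inl (if d i = l then (x i).fst else 0) + inr (if d i + 1 = l then (x i).snd else 0) :=
  rfl

theorem isGradedMap_linearCombination [Fintype ι] {M : Type u} [AddCommGroup M]
    [Module (TrivSqZeroExt A D) M] [Module A M] [IsScalarTower A (TrivSqZeroExt A D) M]
    (G : TrivExtGrading A D M) (d : ι → ℕ) (N : ℕ) (hd : ∀ i, d i + 1 < N) (v : ι → M)
    (hv : ∀ i, G.proj (d i) (v i) = v i) :
    (TrivExtGrading.free d N hd).IsGradedMap G
      (Fintype.linearCombination (TrivSqZeroExt A D) v) := by
  intro l x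
  have proj_v (i : ι) (j : ℕ) : G.proj j (v i) = if d i = j then v i else 0 := by
    rw [← hv i, G.proj_proj]
    grind
  simp only [Fintype.linearCombination_apply, map_sum, TrivExtGrading.free_proj_apply]
  refine Finset.sum_congr rfl fun i _ ↦ ?_
  rw [smul_eq_fst_smul_add_inr_snd_smul (x i), map_add, map_smul, add_smul, inl_smul_eq_smul,
    proj_v]
  congr 1
  · split_ifs <;> simp
  · cases l with
    | zero => simp [G.proj_zero_inr_smul]
    | succ l => rw [G.proj_succ_inr_smul, proj_v]; split_ifs <;> simp_all

end Free

variable (k A D) in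
/-- A graded module over the trivial extension of `A` by `D`, finite-dimensional over `k`. -/
structure TrivExtGradedModule where
  carrier : Type u
  [addCommGroup : AddCommGroup carrier]
  [module : Module (TrivSqZeroExt A D) carrier]
  [moduleBase : Module A carrier]
  [isScalarTower : IsScalarTower A (TrivSqZeroExt A D) carrier]
  [moduleField : Module k carrier]
  [isScalarTowerBase : IsScalarTower k A carrier]
  [isScalarTowerField : IsScalarTower k (TrivSqZeroExt A D) carrier]
  [finite : Module.Finite k carrier]
  grading : TrivExtGrading A D carrier

namespace TrivExtGradedModule

attribute [instance] addCommGroup module moduleBase isScalarTower moduleField isScalarTowerBase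
  isScalarTowerField finite

instance : CoeSort (TrivExtGradedModule k A D) (Type u) := ⟨carrier⟩

instance (X : TrivExtGradedModule k A D) : Module.Finite (TrivSqZeroExt A D) X :=
  Module.Finite.of_restrictScalars_finite k _ _

variable (X : TrivExtGradedModule k A D)

/-- A homogeneous submodule of a graded module, as a graded module. -/
@[reducible]
def ofSubmodule {S : Submodule (TrivSqZeroExt A D) X} (hS : X.grading.IsHomogeneous S) :
    TrivExtGradedModule k A D :=
  have : Module.Finite k S := inferInstanceAs (Module.Finite k (S.restrictScalars k))
  { carrier := S, grading := X.grading.restrict hS }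

/-- A degree-preserving surjection from a projective graded module. -/
structure IsGradedPresentation (P : TrivExtGradedModule k A D)
    (π : P →ₗ[TrivSqZeroExt A D] X) : Prop where
  projective : Module.Projective (TrivSqZeroExt A D) P
  surjective : Function.Surjective π
  isGradedMap : P.grading.IsGradedMap X.grading π

section Fitting

variable {X} {P : TrivExtGradedModule k A D} {π : P →ₗ[TrivSqZeroExt A D] X}
  (hπ : X.IsGradedPresentation P π)
include hπ

theorem IsGradedPresentation.restrict_ker {e : Module.End (TrivSqZeroExt A D) P}
    (he : P.grading.IsGradedMap P.grading e) (hcompl : IsCompl (LinearMap.ker e)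
      (LinearMap.range e)) (hπe : π ∘ₗ e = 0) :
    X.IsGradedPresentation (P.ofSubmodule he.isHomogeneous_ker)
      (π ∘ₗ (LinearMap.ker e).subtype) where
  projective := by
    have := hπ.projective
    exact .of_split (LinearMap.ker e).subtype ((LinearMap.ker e).projectionOnto _ hcompl)
      (by ext; simp)
  surjective m := by
    obtain ⟨x, rfl⟩ := hπ.surjective m
    obtain ⟨u, hu, _, ⟨w, rfl⟩, rfl⟩ := Submodule.mem_sup.1 (hcompl.sup_eq_top ▸ trivial :
      x ∈ LinearMap.ker e ⊔ LinearMap.range e)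
    refine ⟨⟨u, hu⟩, ?_⟩
    rw [map_add, ← LinearMap.comp_apply π e, hπe, LinearMap.zero_apply, add_zero]
    rfl
  isGradedMap j x := hπ.isGradedMap j x

theorem IsGradedPresentation.isNilpotent_of_minimal
    (hmin : ∀ (Q : TrivExtGradedModule k A D) (σ : Q →ₗ[TrivSqZeroExt A D] X),
      X.IsGradedPresentation Q σ → finrank k P ≤ finrank k Q)
    [IsArtinianRing (TrivSqZeroExt A D)] {g : Module.End (TrivSqZeroExt A D) P}
    (hg : P.grading.IsGradedMap P.grading g) (hπg : π ∘ₗ g = 0) : IsNilpotent g := by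
  obtain ⟨n, hcompl, hn⟩ := ((LinearMap.eventually_isCompl_ker_pow_range_pow g).and
    (Filter.eventually_ge_atTop 1)).exists
  have hπgn : π ∘ₗ g ^ n = 0 := by
    rw [← Nat.sub_add_cancel hn, pow_succ', Module.End.mul_eq_comp, ← LinearMap.comp_assoc, hπg,
      LinearMap.zero_comp]
  have ker_eq_top : (LinearMap.ker (g ^ n)).restrictScalars k = ⊤ :=
    Submodule.eq_top_of_finrank_eq <| (Submodule.finrank_le _).antisymm <|
      hmin _ _ (hπ.restrict_ker (hg.pow n) hcompl hπgn)
  refine ⟨n, LinearMap.ker_eq_top.1 (Submodule.restrictScalars_eq_top_iff k _ _ |>.1 ker_eq_top)⟩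

theorem IsGradedPresentation.isProjectiveCover_of_minimal
    (hmin : ∀ (Q : TrivExtGradedModule k A D) (σ : Q →ₗ[TrivSqZeroExt A D] X),
      X.IsGradedPresentation Q σ → finrank k P ≤ finrank k Q)
    [IsArtinianRing (TrivSqZeroExt A D)] : IsProjectiveCover π := by
  have := hπ.projective
  refine ⟨hπ.projective, hπ.surjective, ?_⟩
  obtain ⟨g, hπg, hgJ⟩ := exists_comp_eq_zero_and_sub_mem_jacobson_smul_top π
  have comp_degreeZeroPart : π ∘ₗ P.grading.degreeZeroPart g = 0 := LinearMap.ext fun x ↦ by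
    have comp_apply (y : P) : π (g y) = 0 := LinearMap.congr_fun hπg y
    simp [P.grading.degreeZeroPart_apply, hπ.isGradedMap _ _, comp_apply]
  refine ker_le_of_isNilpotent comp_degreeZeroPart (fun x hx ↦ ?_)
    (hπ.isNilpotent_of_minimal hmin (P.grading.isGradedMap_degreeZeroPart g) comp_degreeZeroPart)
  have degreeZeroPart_sub : P.grading.degreeZeroPart g x - x =
      ∑ j ∈ Finset.range P.grading.len,
        P.grading.proj j (g (P.grading.proj j x) - P.grading.proj j x) := by
    simp only [map_sub, Finset.sum_sub_distrib, P.grading.proj_proj_self, P.grading.sum_proj,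
      P.grading.degreeZeroPart_apply]
  rw [degreeZeroPart_sub]
  exact Submodule.sum_mem _ fun j _ ↦ P.grading.proj_mem_jacobson_smul_top j
    (hgJ _ (hπ.isGradedMap.isHomogeneous_ker hx j))

end Fitting

variable [FiniteDimensional k A] [FiniteDimensional k D] [IsScalarTower k A D]
  [IsScalarTower k Aᵐᵒᵖ D]

theorem exists_isGradedPresentation :
    ∃ (P : TrivExtGradedModule k A D) (π : P →ₗ[TrivSqZeroExt A D] X),
      X.IsGradedPresentation P π := by
  let b := Module.finBasis k X
  let ι := ULift.{u} (Fin X.grading.len × Fin (finrank k X))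
  let v (i : ι) : X := X.grading.proj i.down.1 (b i.down.2)
  have degree_lt (i : ι) : (i.down.1 : ℕ) + 1 < X.grading.len + 1 := by lia
  let P : TrivExtGradedModule k A D :=
    { carrier := ι → TrivSqZeroExt A D
      grading := .free (fun i ↦ i.down.1) (X.grading.len + 1) degree_lt }
  refine ⟨P, Fintype.linearCombination (TrivSqZeroExt A D) v, ⟨?_, ?_, ?_⟩⟩
  · exact inferInstanceAs (Module.Projective (TrivSqZeroExt A D) (ι → TrivSqZeroExt A D))
  · rw [← LinearMap.range_eq_top, Fintype.range_linearCombination, eq_top_iff]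
    intro m _
    rw [← b.sum_repr m]
    refine Submodule.sum_mem _ fun s _ ↦ Submodule.smul_of_tower_mem _ _ ?_
    rw [← X.grading.sum_proj (b s)]
    exact Submodule.sum_mem _ fun j hj ↦
      Submodule.subset_span ⟨⟨⟨j, Finset.mem_range.1 hj⟩, s⟩, rfl⟩
  · exact isGradedMap_linearCombination _ _ _ degree_lt v fun i ↦ X.grading.proj_proj_self _ _

theorem exists_isProjectiveCover :
    ∃ (P : TrivExtGradedModule k A D) (π : P →ₗ[TrivSqZeroExt A D] X),
      IsProjectiveCover π ∧ P.grading.IsGradedMap X.grading π := by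
  have : IsArtinianRing (TrivSqZeroExt A D) := .of_finite k _
  let dims : Set ℕ := {n | ∃ (P : TrivExtGradedModule k A D) (π : P →ₗ[TrivSqZeroExt A D] X),
    X.IsGradedPresentation P π ∧ finrank k P = n}
  have dims_nonempty : dims.Nonempty :=
    let ⟨P, π, hπ⟩ := X.exists_isGradedPresentation
    ⟨_, P, π, hπ, rfl⟩
  obtain ⟨P, π, hπ, hP⟩ := Nat.sInf_mem dims_nonempty
  exact ⟨P, π, hπ.isProjectiveCover_of_minimal
    fun Q σ hσ ↦ hP.trans_le (Nat.sInf_le ⟨Q, σ, hσ, rfl⟩), hπ.isGradedMap⟩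

/-- A graded projective cover of a graded module. -/
noncomputable def cover : TrivExtGradedModule k A D :=
  X.exists_isProjectiveCover.choose

/-- The covering map of `TrivExtGradedModule.cover`. -/
noncomputable def coverMap : X.cover →ₗ[TrivSqZeroExt A D] X :=
  X.exists_isProjectiveCover.choose_spec.choose

theorem isProjectiveCover_coverMap : IsProjectiveCover X.coverMap :=
  X.exists_isProjectiveCover.choose_spec.choose_spec.1

theorem isGradedMap_coverMap : X.cover.grading.IsGradedMap X.grading X.coverMap :=
  X.exists_isProjectiveCover.choose_spec.choose_spec.2

/-- The first syzygy of a graded module: the kernel of its graded projective cover. -/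
noncomputable def syzygy : TrivExtGradedModule k A D :=
  X.cover.ofSubmodule X.isGradedMap_coverMap.isHomogeneous_ker

/-- The inclusion of the first syzygy in the projective cover. -/
noncomputable def syzygyInclusion : X.syzygy →ₗ[TrivSqZeroExt A D] X.cover :=
  (LinearMap.ker X.coverMap).subtype

theorem syzygyInclusion_injective : Function.Injective X.syzygyInclusion :=
  Submodule.subtype_injective _

theorem isGradedMap_syzygyInclusion :
    X.syzygy.grading.IsGradedMap X.cover.grading X.syzygyInclusion :=
  fun _ _ ↦ rfl

theorem exact_syzygyInclusion_coverMap : Function.Exact X.syzygyInclusion X.coverMap :=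
  LinearMap.exact_subtype_ker_map X.coverMap

/-- The `t`-th syzygy of a graded module, formed with graded projective covers. -/
noncomputable def nthSyzygy : ℕ → TrivExtGradedModule k A D
  | 0 => X
  | t + 1 => (nthSyzygy t).syzygy

end TrivExtGradedModule

end GradedModules

section ComplexityBound

open Module

variable {k A D : Type} [Field k] [Ring A] [Algebra k A] [AddCommGroup D] [Module k D]
  [Module A D] [Module Aᵐᵒᵖ D] [SMulCommClass A Aᵐᵒᵖ D] [FiniteDimensional k A]
  [FiniteDimensional k D] [IsScalarTower k A D] [IsScalarTower k Aᵐᵒᵖ D]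
  (X : TrivExtGradedModule k A D)

namespace TrivExtGradedModule

theorem exists_retract_nthSyzygy {P : ℕ → ModuleCat.{0} (TrivSqZeroExt A D)}
    {f : ∀ t, P (t + 1) →ₗ[TrivSqZeroExt A D] P t} {π : P 0 →ₗ[TrivSqZeroExt A D] X}
    (hP : ∀ t, Module.Projective (TrivSqZeroExt A D) (P t)) (hπ : Function.Surjective π)
    (hfπ : LinearMap.range (f 0) = LinearMap.ker π)
    (hf : ∀ t, LinearMap.range (f (t + 1)) = LinearMap.ker (f t)) (t : ℕ) :
    ∃ (N : ModuleCat.{0} (TrivSqZeroExt A D)) (σ : P t →ₗ[TrivSqZeroExt A D] N)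
      (i : X.nthSyzygy t →ₗ[TrivSqZeroExt A D] N) (r : N →ₗ[TrivSqZeroExt A D] X.nthSyzygy t),
      Function.Surjective σ ∧ LinearMap.range (f t) = LinearMap.ker σ ∧
        r ∘ₗ i = LinearMap.id := by
  have : IsArtinianRing (TrivSqZeroExt A D) := .of_finite k _
  induction t with
  | zero => exact ⟨ModuleCat.of _ X, π, LinearMap.id, LinearMap.id, hπ, hfπ, rfl⟩
  | succ t ih =>
    obtain ⟨N, σ, i, r, hσ, hfσ, hri⟩ := ih
    obtain ⟨i', r', hri'⟩ :=
      (X.nthSyzygy t).isProjectiveCover_coverMap.exists_retract_ker_of_retract hσ hri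
    have f_mem (x) : f t x ∈ LinearMap.ker σ := hfσ ▸ LinearMap.mem_range_self _ x
    refine ⟨ModuleCat.of _ (LinearMap.ker σ), (f t).codRestrict _ f_mem, i', r', ?_, ?_, hri'⟩
    · rw [← LinearMap.range_eq_top, LinearMap.range_codRestrict, hfσ, Submodule.comap_subtype_self]
    · exact (hf t).trans (LinearMap.ker_codRestrict _ _ _).symm

theorem exists_finrank_nthSyzygy_le (hX : ComplexityLeOne k (TrivSqZeroExt A D) X) :
    ∃ C, ∀ t, finrank k (X.nthSyzygy t) ≤ C := by
  obtain ⟨C, P, f, π, hP, hfin, hC, hπ, hfπ, hf⟩ := hX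
  refine ⟨C, fun t ↦ le_trans ?_ (hC t)⟩
  have := hfin t
  obtain ⟨N, σ, i, r, hσ, -, hri⟩ := X.exists_retract_nthSyzygy hP hπ hfπ hf t
  let _ : Module k (P t) := Module.compHom (P t) (algebraMap k (TrivSqZeroExt A D))
  have : IsScalarTower k (TrivSqZeroExt A D) (P t) := .of_algebraMap_smul fun _ _ ↦ rfl
  have : Module.Finite k (P t) := .trans (TrivSqZeroExt A D) (P t)
  have surjective_comp : Function.Surjective (r ∘ₗ σ) :=
    (LinearMap.surjective_of_comp_eq_id _ _ hri).comp hσ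
  exact LinearMap.finrank_le_finrank_of_surjective
    (f := (r ∘ₗ σ).restrictScalars k) surjective_comp

end TrivExtGradedModule

end ComplexityBound

section Inflation

open TrivSqZeroExt

universe u

/-- The inflation of an `A`-module `X` along the projection of the trivial extension of `A` by `D`
onto `A`: a type synonym of `X` on which `D` acts by zero. -/
def Inflation (_A _D X : Type u) : Type u := X

variable {k A D X Y : Type u} [AddCommGroup X]

namespace Inflation

instance : AddCommGroup (Inflation A D X) := inferInstanceAs (AddCommGroup X)

instance [Semiring k] [Module k X] : Module k (Inflation A D X) := inferInstanceAs (Module k X)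

instance [Semiring k] [Module k X] [Module.Finite k X] : Module.Finite k (Inflation A D X) :=
  inferInstanceAs (Module.Finite k X)

variable [Ring A] [Module A X]

instance [Semiring k] [Module k X] [SMul k A] [IsScalarTower k A X] :
    IsScalarTower k A (Inflation A D X) :=
  inferInstanceAs (IsScalarTower k A X)

variable (A D X) in
/-- The identity map from a module to its inflation. -/
def of : X ≃ₗ[A] Inflation A D X := LinearEquiv.refl A X

variable [AddCommGroup D] [Module A D] [Module Aᵐᵒᵖ D] [SMulCommClass A Aᵐᵒᵖ D]

instance : Module (TrivSqZeroExt A D) (Inflation A D X) :=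
  Module.compHom X (fstHom ℕ A D).toRingHom

theorem smul_eq_fst_smul (t : TrivSqZeroExt A D) (x : Inflation A D X) : t • x = t.fst • x := rfl

instance [Semiring k] [SMul k A] [Module k X] [IsScalarTower k A X] [SMul k D] :
    IsScalarTower k (TrivSqZeroExt A D) (Inflation A D X) where
  smul_assoc c t x := by simp only [smul_eq_fst_smul, fst_smul, smul_assoc]

theorem inr_smul (δ : D) (x : Inflation A D X) : (inr δ : TrivSqZeroExt A D) • x = 0 := by
  rw [smul_eq_fst_smul, fst_inr, zero_smul]

/-- The map from an inflation induced by an `A`-linear map whose image is killed by `D`. -/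
def lift {M : Type u} [AddCommGroup M] [Module (TrivSqZeroExt A D) M] [Module A M]
    [IsScalarTower A (TrivSqZeroExt A D) M] (φ : X →ₗ[A] M)
    (h : ∀ (δ : D) x, (inr δ : TrivSqZeroExt A D) • φ x = 0) :
    Inflation A D X →ₗ[TrivSqZeroExt A D] M :=
  linearMapOfInr (φ ∘ₗ (of A D X).symm.toLinearMap) fun δ x ↦ by
    rw [inr_smul, map_zero]
    exact (h δ _).symm

variable (D) in
/-- The inflation of an `A`-linear map. -/
def map [AddCommGroup Y] [Module A Y] (f : X →ₗ[A] Y) :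
    Inflation A D X →ₗ[TrivSqZeroExt A D] Inflation A D Y :=
  lift ((of A D Y).toLinearMap ∘ₗ f) fun δ _ ↦ inr_smul δ _

end Inflation

end Inflation

section Components

open TrivSqZeroExt

universe u

variable {A D L M N : Type u} [Ring A] [AddCommGroup D] [Module A D] [Module Aᵐᵒᵖ D]
  [SMulCommClass A Aᵐᵒᵖ D]
  [AddCommGroup L] [Module (TrivSqZeroExt A D) L] [Module A L]
  [AddCommGroup M] [Module (TrivSqZeroExt A D) M] [Module A M]
  [AddCommGroup N] [Module (TrivSqZeroExt A D) N] [Module A N]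

namespace TrivExtGrading

variable (F : TrivExtGrading A D L) (G : TrivExtGrading A D M) (H : TrivExtGrading A D N)

/-- The `j`-th homogeneous component of a graded module. -/
def component (j : ℕ) : Submodule A M := LinearMap.eqLocus (G.proj j) LinearMap.id

/-- The projection of a graded module onto a homogeneous component. -/
def toComponent (j : ℕ) : M →ₗ[A] G.component j :=
  (G.proj j).codRestrict _ (G.proj_proj_self j)

theorem toComponent_coe (j : ℕ) (x : G.component j) : G.toComponent j x = x := Subtype.ext x.2

theorem subsingleton_component_iff {j : ℕ} :
    Subsingleton (G.component j) ↔ ∀ x, G.proj j x = 0 := by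
  rw [Submodule.subsingleton_iff_eq_bot, Submodule.eq_bot_iff]
  exact ⟨fun h x ↦ h _ (G.proj_proj_self j x), fun h x hx ↦ hx.symm.trans (h x)⟩

variable [IsScalarTower A (TrivSqZeroExt A D) M]

theorem projective_component_zero [Module.Projective (TrivSqZeroExt A D) M] :
    Module.Projective A (G.component 0) := by
  refine Module.Projective.of_lifting_property'' fun f hf ↦ ?_
  let q : M →ₗ[TrivSqZeroExt A D] Inflation A D (G.component 0) :=
    linearMapOfInr ((Inflation.of A D _).toLinearMap ∘ₗ G.toComponent 0) fun δ m ↦ by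
      rw [Inflation.inr_smul]
      exact Subtype.ext (G.proj_zero_inr_smul δ m)
  obtain ⟨h, hh⟩ := Module.projective_lifting_property (Inflation.map D f) q hf
  refine ⟨(Inflation.of A D _).symm.toLinearMap ∘ₗ h.restrictScalars A ∘ₗ
    (G.component 0).subtype, LinearMap.ext fun x ↦ ?_⟩
  exact (LinearMap.congr_fun hh (x : M)).trans (G.toComponent_coe 0 x)

theorem injective_component_of_top [Module.Injective (TrivSqZeroExt A D) M] {n : ℕ}
    (hn : ∀ x, G.proj (n + 1) x = 0) : Module.Injective A (G.component n) := by
  refine ⟨fun X Y _ _ _ _ f hf g ↦ ?_⟩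
  let g' : Inflation A D X →ₗ[TrivSqZeroExt A D] M := Inflation.lift ((G.component n).subtype ∘ₗ g)
    fun δ x ↦ G.inr_smul_eq_zero_of_proj_eq_self hn (g x).2 δ
  obtain ⟨h, hh⟩ := Module.Injective.out (Inflation.map D f) hf g'
  refine ⟨G.toComponent n ∘ₗ h.restrictScalars A ∘ₗ (Inflation.of A D Y).toLinearMap, fun x ↦ ?_⟩
  exact (congrArg (G.toComponent n) (hh (Inflation.of A D X x))).trans (G.toComponent_coe n (g x))

namespace IsGradedMap

variable {F G H} [IsScalarTower A (TrivSqZeroExt A D) L] [IsScalarTower A (TrivSqZeroExt A D) N]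
  {ψ : L →ₗ[TrivSqZeroExt A D] M} {φ : M →ₗ[TrivSqZeroExt A D] N} (hψ : F.IsGradedMap G ψ)
  (hφ : G.IsGradedMap H φ) (j : ℕ)

/-- The map induced by a graded map on homogeneous components. -/
def componentMap : G.component j →ₗ[A] H.component j :=
  (φ.restrictScalars A).restrict fun x hx ↦ (hφ j x).symm.trans (congrArg φ hx)

theorem componentMap_toComponent (x : M) :
    hφ.componentMap j (G.toComponent j x) = H.toComponent j (φ x) :=
  Subtype.ext (hφ j x)

theorem componentMap_injective (h : Function.Injective φ) :
    Function.Injective (hφ.componentMap j) :=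
  fun _ _ hxy ↦ Subtype.ext (h (congrArg Subtype.val hxy))

theorem componentMap_surjective (h : Function.Surjective φ) :
    Function.Surjective (hφ.componentMap j) := fun y ↦ by
  obtain ⟨x, hx⟩ := h y
  exact ⟨G.toComponent j x, by rw [componentMap_toComponent, hx, toComponent_coe]⟩

theorem componentMap_exact (h : Function.Exact ψ φ) :
    Function.Exact (hψ.componentMap j) (hφ.componentMap j) := by
  refine fun x ↦ ⟨fun hx ↦ ?_, ?_⟩
  · obtain ⟨y, hy⟩ := (h x).1 (congrArg Subtype.val hx)
    exact ⟨F.toComponent j y, by rw [componentMap_toComponent, hy, toComponent_coe]⟩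
  · rintro ⟨y, rfl⟩
    exact Subtype.ext (h.apply_apply_eq_zero y)

end IsGradedMap

end TrivExtGrading

end Components

section FittingDichotomy

universe u v

theorem injective_of_retract {R : Type u} {M N : Type v} [Ring R] [AddCommGroup M] [Module R M]
    [AddCommGroup N] [Module R N] [Module.Injective R N] {i : M →ₗ[R] N} {r : N →ₗ[R] M}
    (hri : r ∘ₗ i = LinearMap.id) : Module.Injective R M := by
  refine ⟨fun X Y _ _ _ _ f hf g ↦ ?_⟩
  obtain ⟨φ, hφ⟩ := Module.Injective.out f hf (i ∘ₗ g)
  refine ⟨r ∘ₗ φ, fun x ↦ ?_⟩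
  rw [LinearMap.comp_apply, hφ]
  exact LinearMap.congr_fun hri (g x)

theorem injective_of_projective_of_finite {R M : Type u} [Ring R] [AddCommGroup M] [Module R M]
    [Module.Injective R R] [Module.Finite R M] [Module.Projective R M] : Module.Injective R M := by
  obtain ⟨n, f, hf⟩ := Module.Finite.exists_fin' R M
  obtain ⟨s, hs⟩ := Module.projective_lifting_property f LinearMap.id hf
  exact injective_of_retract hs

/-- Every endomorphism of `M` is nilpotent or injective, as for an indecomposable module of finite
length. -/
def HasFittingDichotomy (R M : Type*) [Ring R] [AddCommGroup M] [Module R M] : Prop :=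
  ∀ e : Module.End R M, IsNilpotent e ∨ Function.Injective e

variable {R : Type u} [Ring R]

namespace IsProjectiveCover

section

variable [IsSemiprimaryRing R] {P M : Type*} [AddCommGroup P] [Module R P] [AddCommGroup M]
  [Module R M] {π : P →ₗ[R] M} (hπ : IsProjectiveCover π) {E : Module.End R P}
  {e : Module.End R M} (hE : e ∘ₗ π = π ∘ₗ E)
include hπ hE

theorem isNilpotent_of_isNilpotent (he : IsNilpotent e) : IsNilpotent E := by
  obtain ⟨n, hn⟩ := he
  have comp_pow : (e ^ n) ∘ₗ π = π ∘ₗ (E ^ n) := Module.End.commute_pow_left_of_commute hE n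
  rw [hn, LinearMap.zero_comp] at comp_pow
  exact (hπ.isNilpotent_of_comp_eq_zero comp_pow.symm).of_pow

theorem injective_of_bijective (he : Function.Bijective e) : Function.Injective E := by
  have := hπ.projective
  let q := LinearEquiv.ofBijective e he
  obtain ⟨F, hF⟩ :=
    Module.projective_lifting_property π (q.symm.toLinearMap ∘ₗ π) hπ.surjective
  have comp_mul_eq : π ∘ₗ (F * E) = π := by
    rw [Module.End.mul_eq_comp, ← LinearMap.comp_assoc, hF, LinearMap.comp_assoc, ← hE]
    exact LinearMap.ext fun x ↦ q.symm_apply_apply (π x)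
  have isUnit_mul : IsUnit (F * E) := hπ.isUnit_of_comp_eq_self comp_mul_eq
  exact .of_comp ((Module.End.isUnit_iff _).1 isUnit_mul).injective

end

variable [Small.{v} R] [IsArtinianRing R] {P M : Type v} [AddCommGroup P] [Module R P]
  [AddCommGroup M] [Module R M] [IsArtinian R M] {π : P →ₗ[R] M}

-- An endomorphism of the kernel extends to `P` and then descends to `M`.
theorem hasFittingDichotomy_ker (hπ : IsProjectiveCover π) [Module.Injective R P]
    (hM : HasFittingDichotomy R M) : HasFittingDichotomy R (LinearMap.ker π) := by
  intro e
  let ι := (LinearMap.ker π).subtype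
  have ι_injective : Function.Injective ι := Submodule.subtype_injective _
  obtain ⟨E, hE⟩ : ∃ E : Module.End R P, E ∘ₗ ι = ι ∘ₗ e :=
    Module.Injective.extension_property R P _ _ ι ι_injective (ι ∘ₗ e)
  obtain ⟨e', he'⟩ := exists_comp_eq_of_ker_le_ker_of_surjective π hπ.surjective (π ∘ₗ E)
    fun x hx ↦ (congrArg π (LinearMap.congr_fun hE ⟨x, hx⟩)).trans (e ⟨x, hx⟩).2
  refine (hM e').imp (fun e'_nilpotent ↦ ?_) fun e'_injective ↦ ?_
  · obtain ⟨n, hn⟩ := hπ.isNilpotent_of_isNilpotent he' e'_nilpotent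
    have comp_pow : (E ^ n) ∘ₗ ι = ι ∘ₗ (e ^ n) := Module.End.commute_pow_left_of_commute hE n
    refine ⟨n, LinearMap.ext fun x ↦ ι_injective ?_⟩
    rw [← LinearMap.comp_apply, ← comp_pow, hn, LinearMap.zero_comp, LinearMap.zero_apply,
      LinearMap.zero_apply, map_zero]
  · have E_injective := hπ.injective_of_bijective he'
      (IsArtinian.bijective_of_injective_endomorphism e' e'_injective)
    have : Function.Injective (ι ∘ₗ e) := hE ▸ E_injective.comp ι_injective
    exact .of_comp (f := ι) this

end IsProjectiveCover

end FittingDichotomy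

section Gaps

open TrivSqZeroExt Module

universe u

namespace TrivExtGrading

variable {k A D M : Type u} [Ring A] [AddCommGroup D] [Module A D] [Module Aᵐᵒᵖ D]
  [SMulCommClass A Aᵐᵒᵖ D] [AddCommGroup M] [Module (TrivSqZeroExt A D) M] [Module A M]
  (G : TrivExtGrading A D M)

theorem exists_proj_eq_zero_of_finrank_le [Field k] [SMul k A] [Module k M] [IsScalarTower k A M]
    [FiniteDimensional k M] {C : ℕ} (hC : finrank k M ≤ C) : ∃ j ≤ C, ∀ x, G.proj j x = 0 := by
  by_contra! hcon
  choose x hx using fun j : Fin (C + 1) ↦ hcon j (Nat.lt_succ_iff.1 j.2)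
  have linearIndependent_proj : LinearIndependent k fun j : Fin (C + 1) ↦ G.proj j (x j) := by
    rw [Fintype.linearIndependent_iff]
    intro c hc i
    have proj_sum : G.proj i (∑ j, c j • G.proj j (x j)) = c i • G.proj i (x i) := by
      simp [LinearMap.map_smul_of_tower, G.proj_proj, Fin.val_inj]
    rw [hc, map_zero] at proj_sum
    exact (smul_eq_zero.1 proj_sum.symm).resolve_right (hx i)
  have := linearIndependent_proj.fintype_card_le_finrank
  rw [Fintype.card_fin] at this
  lia

variable [IsScalarTower A (TrivSqZeroExt A D) M]

/-- The projection onto the components of degree greater than `j`, which is linear over the trivial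
extension when the component of degree `j` vanishes. -/
def truncation {j : ℕ} (hj : ∀ x, G.proj j x = 0) : Module.End (TrivSqZeroExt A D) M :=
  G.diagonalEnd (fun i ↦ if j < i then LinearMap.id else 0) fun i δ x ↦ by
    rcases lt_trichotomy i j with h | rfl | h
    · simp [show ¬ j < i + 1 by lia, show ¬ j < i by lia]
    · simp [hj]
    · simp [h, show j < i + 1 by lia, G.proj_succ_inr_smul]

theorem proj_truncation {j : ℕ} (hj : ∀ x, G.proj j x = 0) (i : ℕ) (x : M) :
    G.proj i (G.truncation hj x) = if j < i then G.proj i x else 0 := by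
  refine (G.proj_diagonal _ i x).trans ?_
  split_ifs <;> simp [G.proj_proj_self]

theorem proj_eq_zero_of_hasFittingDichotomy (hM : HasFittingDichotomy (TrivSqZeroExt A D) M)
    (h0 : ∃ x, G.proj 0 x ≠ 0) {j : ℕ} (hj : ∀ x, G.proj j x = 0) {l : ℕ} (hl : j < l) (x : M) :
    G.proj l x = 0 := by
  have truncation_idempotent : IsIdempotentElem (G.truncation hj) :=
    LinearMap.ext fun x ↦ G.ext_proj fun i ↦ by
      simp only [Module.End.mul_apply, proj_truncation]
      split_ifs <;> rfl
  rcases hM (G.truncation hj) with truncation_nilpotent | truncation_injective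
  · have := G.proj_truncation hj l x
    rwa [truncation_idempotent.eq_zero_of_isNilpotent truncation_nilpotent, if_pos hl,
      LinearMap.zero_apply, map_zero, eq_comm] at this
  · obtain ⟨y, hy⟩ := h0
    have truncation_y : G.truncation hj y = y :=
      truncation_injective (LinearMap.congr_fun truncation_idempotent y)
    have := G.proj_truncation hj 0 y
    rw [truncation_y, if_neg (Nat.not_lt_zero j)] at this
    exact absurd this hy

end TrivExtGrading

end Gaps

section TopDegree

open TrivSqZeroExt Module CategoryTheory

universe u v

-- The composite `P → Q → ker π → P` is nilpotent, yet it restricts to the identity on the image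
-- of `Z`.
theorem IsProjectiveCover.subsingleton_of_comp_eq {R : Type u} [Ring R] [Small.{v} R]
    [IsSemiprimaryRing R] {P M Z : Type*} {Q : Type v} [AddCommGroup P] [Module R P]
    [AddCommGroup M] [Module R M] [AddCommGroup Q] [Module R Q] [AddCommGroup Z] [Module R Z]
    {π : P →ₗ[R] M} (hπ : IsProjectiveCover π) [Module.Injective R Q]
    {σ : Q →ₗ[R] LinearMap.ker π} {j : Z →ₗ[R] LinearMap.ker π} (hj : Function.Injective j)
    {w : Z →ₗ[R] Q} (hw : σ ∘ₗ w = j) : Subsingleton Z := by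
  let ι := (LinearMap.ker π).subtype
  have ι_j_injective : Function.Injective (ι ∘ₗ j) := (Submodule.subtype_injective _).comp hj
  obtain ⟨S, hS⟩ := Module.Injective.extension_property R Q _ _ (ι ∘ₗ j) ι_j_injective w
  let g : Module.End R P := ι ∘ₗ σ ∘ₗ S
  obtain ⟨n, hn⟩ := hπ.isNilpotent_of_comp_eq_zero (g := g) (LinearMap.ext fun x ↦ (σ (S x)).2)
  have g_comp : g ∘ₗ (ι ∘ₗ j) = (ι ∘ₗ j) ∘ₗ (1 : Module.End R Z) := by
    rw [LinearMap.comp_assoc, LinearMap.comp_assoc, hS, hw]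
    rfl
  have ι_j_eq_zero : ι ∘ₗ j = 0 := by
    simpa [hn, Module.End.one_eq_id] using (Module.End.commute_pow_left_of_commute g_comp n).symm
  exact subsingleton_of_forall_eq 0 fun z ↦ ι_j_injective (by rw [ι_j_eq_zero]; simp)

theorem eq_zero_of_projective_of_inr_smul_eq_zero {A D P : Type u} [Ring A] [AddCommGroup D]
    [Module A D] [Module Aᵐᵒᵖ D] [SMulCommClass A Aᵐᵒᵖ D] [FaithfulSMul Aᵐᵒᵖ D]
    [AddCommGroup P] [Module (TrivSqZeroExt A D) P] [Module.Projective (TrivSqZeroExt A D) P]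
    (hP : ∀ (δ : D) (x : P), (inr δ : TrivSqZeroExt A D) • x = 0) (x : P) : x = 0 := by
  obtain ⟨s, hs⟩ := Module.Projective.out (R := TrivSqZeroExt A D) (P := P)
  rw [← hs x, Finsupp.linearCombination_apply]
  refine Finset.sum_eq_zero fun p _ ↦ ?_
  have inr_mul_eq_zero (δ : D) : (inr δ : TrivSqZeroExt A D) * s x p = 0 := by
    rw [← smul_eq_mul, ← Finsupp.smul_apply, ← map_smul, hP, map_zero, Finsupp.zero_apply]
  have op_fst_eq_zero : MulOpposite.op (s x p).fst = 0 := by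
    refine eq_of_smul_eq_smul fun δ : D ↦ ?_
    simpa using congrArg snd (inr_mul_eq_zero δ)
  have fst_eq_zero : (s x p).fst = 0 := by simpa using op_fst_eq_zero
  rw [← inl_fst_add_inr_snd_eq (s x p), fst_eq_zero, inl_zero, zero_add]
  exact hP _ _

namespace TrivExtGradedModule

variable {k A D : Type u} [Field k] [Ring A] [Algebra k A] [AddCommGroup D] [Module k D]
  [Module A D] [Module Aᵐᵒᵖ D] [SMulCommClass A Aᵐᵒᵖ D] [FiniteDimensional k A]
  [FiniteDimensional k D] [IsScalarTower k A D] [IsScalarTower k Aᵐᵒᵖ D]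
  (X : TrivExtGradedModule k A D)

theorem hasProjectiveDimensionLT_component_zero_of_syzygy {n : ℕ}
    [HasProjectiveDimensionLT (ModuleCat.of A (X.syzygy.grading.component 0)) n] :
    HasProjectiveDimensionLT (ModuleCat.of A (X.grading.component 0)) (n + 1) := by
  have := X.isProjectiveCover_coverMap.projective
  have exact_component := X.isGradedMap_syzygyInclusion.componentMap_exact X.isGradedMap_coverMap 0
    X.exact_syzygyInclusion_coverMap
  let S := ModuleCat.shortComplexOfCompEqZero _ _ exact_component.linearMap_comp_eq_zero
  have hS : S.ShortExact := ModuleCat.shortComplex_shortExact S exact_component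
    (X.isGradedMap_syzygyInclusion.componentMap_injective 0 X.syzygyInclusion_injective)
    (X.isGradedMap_coverMap.componentMap_surjective 0 X.isProjectiveCover_coverMap.surjective)
  have : Projective (ModuleCat.of A (X.cover.grading.component 0)) :=
    (IsProjective.iff_projective _).1 X.cover.grading.projective_component_zero
  exact hS.hasProjectiveDimensionLT_X₃ n ‹_› (hasProjectiveDimensionLT_of_ge _ 1 _ (by lia))

theorem exists_proj_zero_nthSyzygy_ne_zero
    (hX : ∀ n, ¬ HasProjectiveDimensionLT (ModuleCat.of A (X.grading.component 0)) n) (t : ℕ) :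
    ∃ x, (X.nthSyzygy t).grading.proj 0 x ≠ 0 := by
  have infinite_projDim : ∀ t n, ¬ HasProjectiveDimensionLT
      (ModuleCat.of A ((X.nthSyzygy t).grading.component 0)) n := by
    intro t
    induction t with
    | zero => exact hX
    | succ t ih =>
      intro n hn
      have : HasProjectiveDimensionLT
        (ModuleCat.of A ((X.nthSyzygy t).syzygy.grading.component 0)) n := hn
      exact ih (n + 1) (hasProjectiveDimensionLT_component_zero_of_syzygy _)
  by_contra! hzero
  have := (X.nthSyzygy t).grading.subsingleton_component_iff.2 hzero
  exact infinite_projDim t 0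
    ((hasProjectiveDimensionLT_zero_iff_isZero _).2 (ModuleCat.isZero_of_subsingleton _))

theorem proj_cover_eq_zero {j : ℕ} (hX : ∀ x, X.grading.proj j x = 0)
    (hΩ : ∀ x, X.syzygy.grading.proj j x = 0) (x : X.cover) : X.cover.grading.proj j x = 0 := by
  have coverMap_proj : X.coverMap (X.cover.grading.proj j x) = 0 := by
    rw [X.isGradedMap_coverMap, hX]
  obtain ⟨y, hy⟩ := (X.exact_syzygyInclusion_coverMap _).1 coverMap_proj
  rw [← X.cover.grading.proj_proj_self, ← hy, ← X.isGradedMap_syzygyInclusion, hΩ, map_zero]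

theorem subsingleton_of_proj_cover_eq_zero [FaithfulSMul Aᵐᵒᵖ D]
    (h : ∀ j x, X.cover.grading.proj (j + 1) x = 0) : Subsingleton X := by
  have := X.isProjectiveCover_coverMap.projective
  have inr_smul_eq_zero (δ : D) (x : X.cover) : (inr δ : TrivSqZeroExt A D) • x = 0 :=
    X.cover.grading.ext_proj fun j ↦ by
      rw [map_zero]
      cases j with
      | zero => exact X.cover.grading.proj_zero_inr_smul δ x
      | succ j => exact h j _
  refine subsingleton_of_forall_eq 0 fun y ↦ ?_
  obtain ⟨x, rfl⟩ := X.isProjectiveCover_coverMap.surjective y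
  rw [eq_zero_of_projective_of_inr_smul_eq_zero inr_smul_eq_zero x, map_zero]

variable [Module.Injective (TrivSqZeroExt A D) (TrivSqZeroExt A D)]

theorem injective_cover : Module.Injective (TrivSqZeroExt A D) X.cover :=
  have := X.isProjectiveCover_coverMap.projective
  injective_of_projective_of_finite

theorem hasFittingDichotomy_nthSyzygy (hX : HasFittingDichotomy (TrivSqZeroExt A D) X) (t : ℕ) :
    HasFittingDichotomy (TrivSqZeroExt A D) (X.nthSyzygy t) := by
  have : IsArtinianRing (TrivSqZeroExt A D) := .of_finite k _
  induction t with
  | zero => exact hX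
  | succ t ih =>
    have := (X.nthSyzygy t).injective_cover
    exact (X.nthSyzygy t).isProjectiveCover_coverMap.hasFittingDichotomy_ker ih

theorem proj_nthSyzygy_eq_zero (hX : HasFittingDichotomy (TrivSqZeroExt A D) X) {t C : ℕ}
    (hC : finrank k (X.nthSyzygy t) ≤ C) (h0 : ∃ x, (X.nthSyzygy t).grading.proj 0 x ≠ 0) {l : ℕ}
    (hl : C < l) (x : X.nthSyzygy t) : (X.nthSyzygy t).grading.proj l x = 0 := by
  obtain ⟨j, hjC, hj⟩ := (X.nthSyzygy t).grading.exists_proj_eq_zero_of_finrank_le hC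
  exact (X.nthSyzygy t).grading.proj_eq_zero_of_hasFittingDichotomy
    (X.hasFittingDichotomy_nthSyzygy hX t) h0 hj (hjC.trans_lt hl) x

end TrivExtGradedModule

end TopDegree

section TopStrand

open TrivSqZeroExt Module CategoryTheory

universe u

namespace TrivExtGradedModule

variable {k A D : Type u} [Field k] [Ring A] [Algebra k A] [AddCommGroup D] [Module k D]
  [Module A D] [Module Aᵐᵒᵖ D] [SMulCommClass A Aᵐᵒᵖ D] [FiniteDimensional k A]
  [FiniteDimensional k D] [IsScalarTower k A D] [IsScalarTower k Aᵐᵒᵖ D]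

theorem exists_componentMap_coverMap_comp_eq_id (X : TrivExtGradedModule k A D) (n : ℕ)
    [Module.Injective A (X.syzygy.grading.component n)] :
    ∃ s, X.isGradedMap_coverMap.componentMap n ∘ₗ s = LinearMap.id := by
  have inclusion_injective := X.isGradedMap_syzygyInclusion.componentMap_injective n
    X.syzygyInclusion_injective
  have component_exact := X.isGradedMap_syzygyInclusion.componentMap_exact X.isGradedMap_coverMap n
    X.exact_syzygyInclusion_coverMap
  refine ((component_exact.split_tfae inclusion_injective
    (X.isGradedMap_coverMap.componentMap_surjective n
      X.isProjectiveCover_coverMap.surjective)).out 0 1).2 ?_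
  exact Module.Injective.extension_property A _ _ _ _ inclusion_injective LinearMap.id

variable [Module.Injective (TrivSqZeroExt A D) (TrivSqZeroExt A D)]
  {X : TrivExtGradedModule k A D} {n C : ℕ}

theorem injective_component_nthSyzygy (hC : ∀ t, finrank k (X.nthSyzygy t) ≤ C)
    (hX : ∀ x, X.grading.proj n x = 0) (hn : ∀ t x, (X.nthSyzygy t).grading.proj (n + 1) x = 0)
    (t : ℕ) : Module.Injective A ((X.nthSyzygy t).grading.component n) := by
  have (t : ℕ) : Module.Injective A ((X.nthSyzygy t).cover.grading.component n) :=
    have := (X.nthSyzygy t).injective_cover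
    (X.nthSyzygy t).cover.grading.injective_component_of_top
      ((X.nthSyzygy t).proj_cover_eq_zero (hn t) (hn (t + 1)))
  have (t : ℕ) : FiniteDimensional k ((X.nthSyzygy t).grading.component n) :=
    .of_injective (((X.nthSyzygy t).grading.component n).subtype.restrictScalars k)
      (Submodule.subtype_injective _)
  have : Subsingleton ((X.nthSyzygy 0).grading.component n) :=
    X.grading.subsingleton_component_iff.2 hX
  exact injective_of_bounded_coresolution k
    (fun t ↦ (X.nthSyzygy t).isGradedMap_syzygyInclusion.componentMap_injective n
      (X.nthSyzygy t).syzygyInclusion_injective)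
    (fun t ↦ (X.nthSyzygy t).isGradedMap_syzygyInclusion.componentMap_exact
      (X.nthSyzygy t).isGradedMap_coverMap n (X.nthSyzygy t).exact_syzygyInclusion_coverMap)
    (fun t ↦ (X.nthSyzygy t).isGradedMap_coverMap.componentMap_surjective n
      (X.nthSyzygy t).isProjectiveCover_coverMap.surjective)
    (fun t ↦ (LinearMap.finrank_le_finrank_of_injective
      (f := ((X.nthSyzygy t).grading.component n).subtype.restrictScalars k)
      (Submodule.subtype_injective _)).trans (hC t)) t

theorem proj_syzygy_eq_zero_of_injective (hΩ : ∀ x, X.syzygy.grading.proj (n + 1) x = 0)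
    (hcover : ∀ x, X.syzygy.cover.grading.proj (n + 1) x = 0)
    [Module.Injective A (X.syzygy.syzygy.grading.component n)] (x : X.syzygy) :
    X.syzygy.grading.proj n x = 0 := by
  have : IsArtinianRing (TrivSqZeroExt A D) := .of_finite k _
  have := X.syzygy.injective_cover
  obtain ⟨s, hs⟩ := X.syzygy.exists_componentMap_coverMap_comp_eq_id n
  let j : Inflation A D (X.syzygy.grading.component n) →ₗ[TrivSqZeroExt A D] X.syzygy :=
    Inflation.lift (X.syzygy.grading.component n).subtype
      fun δ y ↦ X.syzygy.grading.inr_smul_eq_zero_of_proj_eq_self hΩ y.2 δ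
  let w : Inflation A D (X.syzygy.grading.component n) →ₗ[TrivSqZeroExt A D] X.syzygy.cover :=
    Inflation.lift ((X.syzygy.cover.grading.component n).subtype ∘ₗ s)
      fun δ y ↦ X.syzygy.cover.grading.inr_smul_eq_zero_of_proj_eq_self hcover (s y).2 δ
  have j_injective : Function.Injective j := Submodule.subtype_injective _
  have coverMap_comp_w : X.syzygy.coverMap ∘ₗ w = j :=
    LinearMap.ext fun y ↦ congrArg Subtype.val (LinearMap.congr_fun hs y)
  have : Subsingleton (Inflation A D (X.syzygy.grading.component n)) :=
    X.isProjectiveCover_coverMap.subsingleton_of_comp_eq j_injective coverMap_comp_w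
  exact X.syzygy.grading.subsingleton_component_iff.1 this x

theorem exists_hasProjectiveDimensionLT_component_zero [FaithfulSMul Aᵐᵒᵖ D]
    (hX : HasFittingDichotomy (TrivSqZeroExt A D) X) (hX0 : ∀ j x, X.grading.proj (j + 1) x = 0)
    (hC : ∀ t, finrank k (X.nthSyzygy t) ≤ C) :
    ∃ n, HasProjectiveDimensionLT (ModuleCat.of A (X.grading.component 0)) n := by
  by_contra! infinite_projDim
  have h0 := X.exists_proj_zero_nthSyzygy_ne_zero infinite_projDim
  let degrees : Set ℕ := {j | ∃ t x, (X.nthSyzygy t).grading.proj j x ≠ 0}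
  have degrees_bddAbove : BddAbove degrees := ⟨C, fun j ⟨t, x, hx⟩ ↦ by
    by_contra! hj
    exact hx (X.proj_nthSyzygy_eq_zero hX (hC t) (h0 t) hj x)⟩
  obtain ⟨t, x, hx⟩ : sSup degrees ∈ degrees := Nat.sSup_mem ⟨0, 0, h0 0⟩ degrees_bddAbove
  have proj_eq_zero (j : ℕ) (hj : sSup degrees < j) (t : ℕ) (x : X.nthSyzygy t) :
      (X.nthSyzygy t).grading.proj j x = 0 := by
    by_contra h
    exact hj.not_ge (le_csSup degrees_bddAbove ⟨t, x, h⟩)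
  have proj_cover (j : ℕ) (hj : sSup degrees < j) (t : ℕ) (x : (X.nthSyzygy t).cover) :
      (X.nthSyzygy t).cover.grading.proj j x = 0 :=
    (X.nthSyzygy t).proj_cover_eq_zero (proj_eq_zero j hj t) (proj_eq_zero j hj (t + 1)) x
  cases hn : sSup degrees with
  | zero =>
    have := X.subsingleton_of_proj_cover_eq_zero fun j ↦ proj_cover (j + 1) (by lia) 0
    obtain ⟨y, hy⟩ := h0 0
    exact hy (Subsingleton.elim (α := X) _ _)
  | succ n =>
    rw [hn] at hx proj_eq_zero proj_cover
    cases t with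
    | zero => exact hx (hX0 n x)
    | succ t =>
      have : Module.Injective A ((X.nthSyzygy t).syzygy.syzygy.grading.component (n + 1)) :=
        injective_component_nthSyzygy hC (hX0 n) (proj_eq_zero _ (Nat.lt_succ_self _)) (t + 2)
      exact hx (proj_syzygy_eq_zero_of_injective (proj_eq_zero _ (Nat.lt_succ_self _) (t + 1))
        (proj_cover _ (Nat.lt_succ_self _) (t + 1)) x)

end TrivExtGradedModule

end TopStrand

section SelfInjective

open TrivSqZeroExt Module

theorem injective_self_of_nondegenerate {k R : Type*} [Field k] [Ring R] [Algebra k R]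
    [FiniteDimensional k R] (form : R →ₗ[k] k) (hform : ∀ u, (∀ s, form (s * u) = 0) → u = 0) :
    Module.Injective R R := by
  let pairing : R →ₗ[k] Dual k R := (LinearMap.mul k R).flip.compr₂ form
  have pairing_injective : Function.Injective pairing :=
    (injective_iff_map_eq_zero _).2 fun u hu ↦ hform u fun s ↦ LinearMap.congr_fun hu s
  have pairing_surjective : Function.Surjective pairing :=
    (LinearMap.injective_iff_surjective_of_finrank_eq_finrank Subspace.dual_finrank_eq.symm).1
      pairing_injective
  refine Module.Baer.injective fun I g ↦ ?_
  obtain ⟨ψ, hψ⟩ := LinearMap.exists_extend (p := I.restrictScalars k)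
    (form ∘ₗ g.restrictScalars k)
  obtain ⟨t, rfl⟩ := pairing_surjective ψ
  refine ⟨LinearMap.toSpanSingleton R R t, fun x hx ↦ sub_eq_zero.1 (hform _ fun s ↦ ?_)⟩
  have form_mul_map : form (s * x * t) = form (s * g ⟨x, hx⟩) := by
    rw [← smul_eq_mul s (g _), ← map_smul]
    exact LinearMap.congr_fun hψ ⟨s * x, I.mul_mem_left s hx⟩
  rw [LinearMap.toSpanSingleton_apply, smul_eq_mul, mul_sub, ← mul_assoc, map_sub, form_mul_map,
    sub_self]

variable (k A : Type) [Field k] [Ring A] [Algebra k A]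

instance faithfulSMul_dual : FaithfulSMul Aᵐᵒᵖ (Dual k A) where
  eq_of_smul_eq_smul {a b} h := by
    refine MulOpposite.unop_injective (sub_eq_zero.1 ?_)
    refine (Module.forall_dual_apply_eq_zero_iff k _).1 fun f ↦ ?_
    have : f (a.unop * 1) = f (b.unop * 1) := LinearMap.congr_fun (h f) 1
    rwa [mul_one, mul_one, ← sub_eq_zero, ← map_sub] at this

theorem trivialExtension_snd_mul_apply_one (s t : TrivialExtension k A) :
    (s * t).snd 1 = t.snd s.fst + s.snd t.fst := by
  rw [snd_mul, LinearMap.add_apply]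
  change t.snd (1 * s.fst) + s.snd (t.fst * 1) = _
  rw [one_mul, mul_one]

instance injective_trivialExtension [FiniteDimensional k A] :
    Module.Injective (TrivialExtension k A) (TrivialExtension k A) := by
  refine injective_self_of_nondegenerate
    (Dual.eval k A 1 ∘ₗ (sndHom A (Dual k A)).restrictScalars k) fun u hu ↦ ?_
  have pairing_eq_zero (s : TrivialExtension k A) : u.snd s.fst + s.snd u.fst = 0 :=
    (trivialExtension_snd_mul_apply_one k A s u).symm.trans (hu s)
  refine TrivSqZeroExt.ext ?_ (LinearMap.ext fun a ↦ ?_)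
  · refine (Module.forall_dual_apply_eq_zero_iff k _).1 fun f ↦ ?_
    simpa using pairing_eq_zero (inr f)
  · simpa using pairing_eq_zero (inl a)

end SelfInjective

section MinimalCounterexample

open Module CategoryTheory

universe u

variable {k A : Type u} [Field k] [Ring A] [Algebra k A]

theorem exists_hasProjectiveDimensionLT_of_ker_of_range {X Y : Type u} [AddCommGroup X]
    [Module A X] [AddCommGroup Y] [Module A Y] (f : X →ₗ[A] Y)
    (hker : ∃ n, HasProjectiveDimensionLT (ModuleCat.of A (LinearMap.ker f)) n)
    (hrange : ∃ n, HasProjectiveDimensionLT (ModuleCat.of A (LinearMap.range f)) n) :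
    ∃ n, HasProjectiveDimensionLT (ModuleCat.of A X) n := by
  obtain ⟨m, hm⟩ := hker
  obtain ⟨n, hn⟩ := hrange
  have rangeRestrict_exact : Function.Exact (LinearMap.ker f).subtype f.rangeRestrict := by
    rw [LinearMap.exact_iff, LinearMap.ker_rangeRestrict, Submodule.range_subtype]
  let S := ModuleCat.shortComplexOfCompEqZero _ _ rangeRestrict_exact.linearMap_comp_eq_zero
  have hS : S.ShortExact := ModuleCat.shortComplex_shortExact S rangeRestrict_exact
    (Submodule.subtype_injective _) f.surjective_rangeRestrict
  exact ⟨max m n, hS.hasProjectiveDimensionLT_X₂ _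
    (hasProjectiveDimensionLT_of_ge _ m _ (le_max_left m n))
    (hasProjectiveDimensionLT_of_ge _ n _ (le_max_right m n))⟩

-- A module of least dimension among those of infinite projective dimension has no endomorphism
-- with nonzero kernel and nonzero image.
theorem exists_hasProjectiveDimensionLT_of_forall_end
    (h : ∀ (X : Type u) [AddCommGroup X] [Module A X] [Module k X] [IsScalarTower k A X]
      [FiniteDimensional k X], (∀ e : Module.End A X, e = 0 ∨ Function.Injective e) →
      ∃ n, HasProjectiveDimensionLT (ModuleCat.of A X) n)
    (X : Type u) [AddCommGroup X] [Module A X] [Module k X] [IsScalarTower k A X]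
    [FiniteDimensional k X] : ∃ n, HasProjectiveDimensionLT (ModuleCat.of A X) n := by
  induction hN : finrank k X using Nat.strong_induction_on generalizing X with
  | _ N ih =>
    subst hN
    by_contra hX
    refine hX (h X fun e ↦ ?_)
    by_contra! he
    have rank_nullity := LinearMap.finrank_range_add_finrank_ker (e.restrictScalars k)
    have : FiniteDimensional k (LinearMap.ker e) :=
      inferInstanceAs (FiniteDimensional k (LinearMap.ker (e.restrictScalars k)))
    have : FiniteDimensional k (LinearMap.range e) :=
      inferInstanceAs (FiniteDimensional k (LinearMap.range (e.restrictScalars k)))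
    have finrank_ker_pos : 0 < finrank k (LinearMap.ker e) := by
      have := Submodule.nontrivial_iff_ne_bot.2 (LinearMap.ker_eq_bot.not.2 he.2)
      exact finrank_pos
    have finrank_range_pos : 0 < finrank k (LinearMap.range e) := by
      have := Submodule.nontrivial_iff_ne_bot.2 (LinearMap.range_eq_bot.not.2 he.1)
      exact finrank_pos
    change finrank k (LinearMap.range e) + finrank k (LinearMap.ker e) = finrank k X
      at rank_nullity
    exact hX (exists_hasProjectiveDimensionLT_of_ker_of_range e (ih _ (by lia) _ rfl)
      (ih _ (by lia) _ rfl))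

namespace TrivExtGradedModule

variable {D X : Type u} [AddCommGroup D] [Module k D] [Module A D] [Module Aᵐᵒᵖ D]
  [SMulCommClass A Aᵐᵒᵖ D] [AddCommGroup X] [Module A X] [Module k X] [IsScalarTower k A X]
  [FiniteDimensional k X]

variable (k A D X) in
/-- The inflation of a finite-dimensional `A`-module as a graded module concentrated in degree
zero. -/
def inflation : TrivExtGradedModule k A D where
  carrier := Inflation A D X
  grading := .concentrated Inflation.inr_smul

variable (k A D X) in
/-- The identification of an `A`-module with the degree-zero component of its inflation. -/
def inflationComponentZeroEquiv : (inflation k A D X).grading.component 0 ≃ₗ[A] X :=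
  (LinearEquiv.ofTop _ (eq_top_iff.2 fun _ _ ↦ rfl)).trans (Inflation.of A D X).symm

theorem hasFittingDichotomy_inflation
    (hX : ∀ e : Module.End A X, e = 0 ∨ Function.Injective e) :
    HasFittingDichotomy (TrivSqZeroExt A D) (inflation k A D X) := fun e ↦ by
  let e₀ : Module.End A X := (Inflation.of A D X).symm.toLinearMap ∘ₗ
    (e.restrictScalars A : Module.End A (Inflation A D X)) ∘ₗ (Inflation.of A D X).toLinearMap
  refine (hX e₀).imp (fun he₀ ↦ ⟨1, ?_⟩) id
  rw [pow_one]
  exact LinearMap.ext fun x ↦ LinearMap.congr_fun he₀ x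

end TrivExtGradedModule

end MinimalCounterexample

section FiniteProjectiveDimension

open Module CategoryTheory

variable {k A D : Type} [Field k] [Ring A] [Algebra k A] [AddCommGroup D] [Module k D]
  [Module A D] [Module Aᵐᵒᵖ D] [SMulCommClass A Aᵐᵒᵖ D] [FiniteDimensional k A]
  [FiniteDimensional k D] [IsScalarTower k A D] [IsScalarTower k Aᵐᵒᵖ D] [FaithfulSMul Aᵐᵒᵖ D]
  [Module.Injective (TrivSqZeroExt A D) (TrivSqZeroExt A D)]

theorem exists_hasProjectiveDimensionLT_of_complexityLeOne
    (h : ∀ (M : Type) [AddCommGroup M] [Module (TrivSqZeroExt A D) M],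
      Module.Finite (TrivSqZeroExt A D) M → ComplexityLeOne k (TrivSqZeroExt A D) M)
    (X : Type) [AddCommGroup X] [Module A X] [Module.Finite A X] :
    ∃ n, HasProjectiveDimensionLT (ModuleCat.of A X) n := by
  let : Module k X := Module.compHom X (algebraMap k A)
  have : IsScalarTower k A X := .of_algebraMap_smul fun _ _ ↦ rfl
  have : FiniteDimensional k X := Module.Finite.trans A X
  refine exists_hasProjectiveDimensionLT_of_forall_end (k := k) (fun Y _ _ _ _ _ hY ↦ ?_) X
  let Z := TrivExtGradedModule.inflation k A D Y
  obtain ⟨C, hC⟩ := Z.exists_finrank_nthSyzygy_le (h Z inferInstance)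
  obtain ⟨n, hn⟩ := TrivExtGradedModule.exists_hasProjectiveDimensionLT_component_zero
    (TrivExtGradedModule.hasFittingDichotomy_inflation hY) (fun _ _ ↦ rfl) hC
  exact ⟨n, hasProjectiveDimensionLT_of_iso
    (TrivExtGradedModule.inflationComponentZeroEquiv k A D Y).toModuleIso n⟩

end FiniteProjectiveDimension

section DualBimodule

variable (k A : Type) [Field k] [Ring A] [Algebra k A]

theorem finite_globalDimension_of_complexityLeOne_general [FiniteDimensional k A]
    (h : ∀ (M : Type) [AddCommGroup M] [Module (TrivialExtension k A) M],
      Module.Finite (TrivialExtension k A) M → ComplexityLeOne k (TrivialExtension k A) M) :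
    HasFiniteGlobalDimension A := by
  have : IsArtinianRing A := .of_finite k A
  obtain ⟨n, hn⟩ := exists_hasProjectiveDimensionLT_of_complexityLeOne h (A ⧸ Ring.jacobson A)
  have := CategoryTheory.hasProjectiveDimensionLT_of_ge
    (ModuleCat.of A (A ⧸ Ring.jacobson A)) n (n + 1) n.le_succ
  exact ⟨n, fun M _ _ ↦
    have := hasProjectiveDimensionLT_of_jacobson (n := n) (ModuleCat.of A M)
    projDimLE_of_hasProjectiveDimensionLT n M⟩

/-- Let `A` be a ring-indecomposable finite-dimensional `k`-algebra. If
every finitely generated module over the trivial extension algebra `T(A)` has complexity at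
most one, then `A` has finite global dimension. -/
theorem finite_globalDimension_of_complexityLeOne
    [FiniteDimensional k A]
    (hind : ∀ e : A, e ∈ Subring.center A → e * e = e → e = 0 ∨ e = 1)
    (h : ∀ (M : Type) [AddCommGroup M] [Module (TrivialExtension k A) M],
      Module.Finite (TrivialExtension k A) M → ComplexityLeOne k (TrivialExtension k A) M) :
    HasFiniteGlobalDimension A := by
  exact finite_globalDimension_of_complexityLeOne_general k A h

end DualBimodule
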